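/- arXiv:math/9812046 — 7 statements merged into one kernel-verified Lean document; each statement's English description precedes it below -/
import Mathlib

section
/- Let I ⊂ ℝ be a bounded closed interval with 0 ∉ I. For every ε > 0 there exists a constant K > 0 such that for every odd squarefree positive integer q one has |R_2(I,q) − |I|| ≤ K · s_q^{−1+ε}, where |I| is the length of I. -/
/-!
For an odd prime `p`, the indicator of the squares is `(1 + χ + δ₀) / 2` with `χ` the quadratic
character, and `∑ χ(y) χ(y - h) = -1` for `p ∤ h` (a Jacobi sum). Hence
`N(h, p) = (p + 1) / 4 * (1 + a_p(h))`, where the fluctuation `a_p` (`fluct`) equals `1` if `p ∣ h`,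
is at most `2 / p` in absolute value otherwise, and has total sum `1` over a period.
Both `N_q` and `N(h, q)` are multiplicative in `q` by the Chinese remainder theorem, so
`N(h, q) / N_q = 2 ^ (-ω(q)) ∏_{p ∣ q} (1 + a_p(h)) = 2 ^ (-ω(q)) ∑_{c ∣ q} a_c(h)` with
`a_c = ∏_{p ∣ c} a_p`.

The sum of `a_c` over `h ∈ sI` has expected value `s|I| / c`, and these expected values add up to
exactly `|I|`. The deviation from it is bounded in two ways:
* by `3 ^ ω(c)`, since each residue class mod `c` is hit `s|I| / c + O(1)` times
  (`sum_fluct_sub_le`);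
* by a constant times `3 ^ ω(c) * s / c`, since `a_p(h)` is large only when `p ∣ h` and, because
  `0 ∉ I`, the set `sI` contains `O(s / d)` multiples of `d` (`abs_sum_fluct_le`).

Rankin's trick `min (1, s / c) ≤ (s / c) ^ δ` gives a total error
`≪ 2 ^ (-ω(q)) s ^ δ ∏_{p ∣ q} (1 + 3 p ^ (-δ))`. With `δ = ε / 2` and `s ≤ 2 ^ ω(q)`, this is
`s ^ (-1 + ε)` times at most `∏_{p ∣ q} 2 ^ (-δ) (1 + 3 p ^ (-δ))`, in which all but boundedly many
factors are at most `1` (`exists_prod_bound`).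
-/

open scoped Pointwise Classical

/-- The number of squares modulo `q`. -/
noncomputable def Nsq (q : ℕ) : ℕ :=
  Nat.card {x : ZMod q // ∃ y : ZMod q, y ^ 2 = x}

/-- The mean spacing `s_q = q / N_q` between squares modulo `q`. -/
noncomputable def meanSp (q : ℕ) : ℝ := (q : ℝ) / (Nsq q : ℝ)

/-- `N(h,q)`: the number of pairs `(y_1, y_2)` of squares modulo `q` with
`y_1 - y_2 ≡ h (mod q)`. -/
noncomputable def Npair (q : ℕ) (h : ℤ) : ℕ :=
  Nat.card {y : ZMod q × ZMod q //
    (∃ z : ZMod q, z ^ 2 = y.1) ∧ (∃ z : ZMod q, z ^ 2 = y.2) ∧ y.1 - y.2 = (h : ZMod q)}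

/-- The pair correlation `R_2(I,q) = (1/N_q) ∑_{h ∈ s_q I ∩ ℤ} N(h,q)`. -/
noncomputable def R2corr (q : ℕ) (I : Set ℝ) : ℝ :=
  (1 / (Nsq q : ℝ)) * ∑ᶠ h : ℤ, if (h : ℝ) ∈ meanSp q • I then (Npair q h : ℝ) else 0

/-! ### Squares and their differences modulo a prime -/

/-- The indicator function of the squares in `ZMod n`, with real values. -/
noncomputable def sqInd {n : ℕ} (x : ZMod n) : ℝ := if ∃ z : ZMod n, z ^ 2 = x then 1 else 0

/-- The number of representations of `x : ZMod n` as a difference of two squares; `Npair n h` is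
the value at the class of `h`. -/
noncomputable def pairCount (n : ℕ) (x : ZMod n) : ℕ :=
  Nat.card {y : ZMod n × ZMod n //
    (∃ z : ZMod n, z ^ 2 = y.1) ∧ (∃ z : ZMod n, z ^ 2 = y.2) ∧ y.1 - y.2 = x}

lemma Nsq_eq_sum (n : ℕ) [NeZero n] : (Nsq n : ℝ) = ∑ x : ZMod n, sqInd x := by
  unfold Nsq sqInd
  rw [Nat.card_eq_fintype_card, Fintype.card_subtype, ← Finset.sum_boole]
  refine Finset.sum_congr rfl fun x _ => ?_
  by_cases h : ∃ z : ZMod n, z ^ 2 = x <;> simp only [h, if_true, if_false]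

lemma pairCount_eq_sum (n : ℕ) [NeZero n] (x : ZMod n) :
    (pairCount n x : ℝ) = ∑ y : ZMod n, sqInd y * sqInd (y - x) := by
  have h1 : pairCount n x = Nat.card {y : ZMod n // (∃ z : ZMod n, z ^ 2 = y) ∧
      ∃ z : ZMod n, z ^ 2 = y - x} := by
    refine Nat.card_congr ⟨fun y => ⟨y.1.1, y.2.1, ?_⟩, fun y => ⟨(y.1, y.1 - x), y.2.1, y.2.2, ?_⟩,
      fun y => ?_, fun y => ?_⟩
    · obtain ⟨⟨y1, y2⟩, h1, h2, h3⟩ := y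
      obtain ⟨z, hz⟩ := h2
      exact ⟨z, by simp only at h3 hz ⊢; rw [← h3, hz]; ring⟩
    · simp
    · obtain ⟨⟨y1, y2⟩, h1, h2, h3⟩ := y
      simp only at h3
      simp [← h3]
    · rfl
  rw [h1, Nat.card_eq_fintype_card, Fintype.card_subtype]
  rw [← Finset.sum_boole]
  refine Finset.sum_congr rfl fun y _ => ?_
  unfold sqInd
  by_cases h1 : ∃ z : ZMod n, z ^ 2 = y <;> by_cases h2 : ∃ z : ZMod n, z ^ 2 = y - x <;>
    simp only [h1, h2, and_self, and_true, and_false, if_true, if_false, mul_one, mul_zero]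

/-- Over `𝔽_p` the indicator of the squares is `(1 + χ + δ₀) / 2`, where `χ` is the quadratic
character. -/
lemma sqInd_eq (p : ℕ) [Fact p.Prime] (x : ZMod p) :
    sqInd x = (1 + (quadraticChar (ZMod p) x : ℝ) + (if x = 0 then 1 else 0)) / 2 := by
  unfold sqInd
  have key : (∃ z : ZMod p, z ^ 2 = x) ↔ IsSquare x := by
    rw [isSquare_iff_exists_sq]
    simp only [eq_comm]
  rw [key]
  by_cases hx : x = 0
  · subst hx
    simp
  · by_cases hs : IsSquare x
    · rw [(quadraticChar_one_iff_isSquare hx).2 hs]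
      simp [hs, hx]
    · rw [quadraticChar_neg_one_iff_not_isSquare.2 hs]
      simp [hs, hx]

lemma sum_quadraticChar_real (p : ℕ) [Fact p.Prime] (hp : p ≠ 2) :
    ∑ x : ZMod p, (quadraticChar (ZMod p) x : ℝ) = 0 := by
  have := quadraticChar_sum_zero (F := ZMod p) (by rwa [ZMod.ringChar_zmod_n])
  exact_mod_cast this

/-- The autocorrelation of the quadratic character at a non-zero shift is `-1`; after scaling by
the shift this is the evaluation of the Jacobi sum `J(χ, χ⁻¹)`. -/
lemma sum_quadraticChar_shift (p : ℕ) [Fact p.Prime] (hp : p ≠ 2) (x : ZMod p) (hx : x ≠ 0) :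
    ∑ y : ZMod p, (quadraticChar (ZMod p) y : ℝ) * quadraticChar (ZMod p) (y - x) = -1 := by
  have hc : ringChar (ZMod p) ≠ 2 := by rwa [ZMod.ringChar_zmod_n]
  set χ := quadraticChar (ZMod p) with hχ
  have hinv : χ⁻¹ = χ := (quadraticChar_isQuadratic (ZMod p)).inv
  have hJ := jacobiSum_nontrivial_inv (quadraticChar_ne_one hc)
  rw [← hχ, hinv] at hJ
  have h1 : χ (-1) * χ (-1) = 1 := by rw [← map_mul]; simp
  have h2 : χ x * χ x = 1 := by
    have := quadraticChar_sq_one hx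
    rwa [sq] at this
  have key : ∑ y : ZMod p, χ y * χ (y - x) = -1 := by
    rw [← Equiv.sum_comp (Equiv.mulLeft₀ x hx) (fun y => χ y * χ (y - x))]
    have : ∀ z : ZMod p, χ (Equiv.mulLeft₀ x hx z) * χ (Equiv.mulLeft₀ x hx z - x)
        = χ (-1) * (χ z * χ (1 - z)) := by
      intro z
      have e1 : x * z - x = x * (-1 * (1 - z)) := by ring
      change χ (x * z) * χ (x * z - x) = _
      rw [e1, map_mul, map_mul, map_mul]
      linear_combination (χ z * χ (-1) * χ (1 - z)) * h2
    simp_rw [this]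
    rw [← Finset.mul_sum]
    unfold jacobiSum at hJ
    rw [hJ]
    linear_combination -h1
  exact_mod_cast key

lemma sum_sqInd (p : ℕ) [Fact p.Prime] (hp : p ≠ 2) :
    ∑ x : ZMod p, sqInd x = ((p : ℝ) + 1) / 2 := by
  simp_rw [sqInd_eq p]
  rw [← Finset.sum_div, Finset.sum_add_distrib, Finset.sum_add_distrib,
    sum_quadraticChar_real p hp]
  simp [ZMod.card]

lemma Nsq_prime (p : ℕ) [Fact p.Prime] (hp : p ≠ 2) : (Nsq p : ℝ) = ((p : ℝ) + 1) / 2 := by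
  rw [Nsq_eq_sum, sum_sqInd p hp]

lemma pairCount_zero (p : ℕ) [Fact p.Prime] (hp : p ≠ 2) :
    (pairCount p 0 : ℝ) = ((p : ℝ) + 1) / 2 := by
  rw [pairCount_eq_sum, ← sum_sqInd p hp]
  refine Finset.sum_congr rfl fun y _ => ?_
  simp [sqInd]

lemma pairCount_ne_zero (p : ℕ) [Fact p.Prime] (hp : p ≠ 2) (x : ZMod p) (hx : x ≠ 0) :
    (pairCount p x : ℝ) = ((p : ℝ) + 1 + quadraticChar (ZMod p) x
      + quadraticChar (ZMod p) (-x)) / 4 := by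
  rw [pairCount_eq_sum]
  have h0 : ∑ y : ZMod p, (quadraticChar (ZMod p) (y - x) : ℝ) = 0 := by
    exact ((Equiv.subRight x).sum_comp (fun y => (quadraticChar (ZMod p) y : ℝ))).trans
      (sum_quadraticChar_real p hp)
  have h1 : ∀ y : ZMod p, sqInd y * sqInd (y - x) =
      (1 + (quadraticChar (ZMod p) y : ℝ) + (quadraticChar (ZMod p) (y - x) : ℝ)
        + (quadraticChar (ZMod p) y : ℝ) * quadraticChar (ZMod p) (y - x)
        + (if y = 0 then (1 + quadraticChar (ZMod p) (-x) : ℝ) else 0)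
        + (if y = x then (1 + quadraticChar (ZMod p) x : ℝ) else 0)) / 4 := by
    intro y
    rw [sqInd_eq, sqInd_eq]
    by_cases hy : y = 0
    · subst hy
      simp [hx, hx.symm]
      ring
    · by_cases hyx : y = x
      · subst hyx
        simp [hx]
        ring
      · simp [hy, hyx, sub_eq_zero]
        ring
  simp_rw [h1]
  rw [← Finset.sum_div]
  simp only [Finset.sum_add_distrib]
  rw [h0, sum_quadraticChar_real p hp, sum_quadraticChar_shift p hp x hx]
  simp [ZMod.card]
  ring

/-- The fluctuation of the number of representations modulo `p`, normalised by its generic size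
`(p + 1) / 4`. -/
noncomputable def fluct (p : ℕ) (x : ZMod p) : ℝ := 4 * (pairCount p x : ℝ) / ((p : ℝ) + 1) - 1

/-- The fluctuation is `1` at `0` and has size at most `2 / p` elsewhere. The bound adds the two
cases so that products over `p` can be expanded by `Finset.prod_add`. -/
lemma abs_fluct_le (p : ℕ) [Fact p.Prime] (hp : p ≠ 2) (x : ZMod p) :
    |fluct p x| ≤ (if x = 0 then 1 else 0) + 2 / (p : ℝ) := by
  have hp0 : (0 : ℝ) < p := by exact_mod_cast (Fact.out : p.Prime).pos
  have hp1 : (0 : ℝ) < (p : ℝ) + 1 := by linarith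
  by_cases hx : x = 0
  · subst hx
    have : fluct p 0 = 1 := by
      unfold fluct
      rw [pairCount_zero p hp]
      field_simp
      norm_num
    rw [this]
    simp
    positivity
  · have : fluct p x = ((quadraticChar (ZMod p) x : ℝ) + quadraticChar (ZMod p) (-x))
        / ((p : ℝ) + 1) := by
      unfold fluct
      rw [pairCount_ne_zero p hp x hx]
      field_simp
      ring
    rw [this, abs_div, abs_of_pos hp1]
    simp only [hx, if_false, zero_add]
    have hb : ∀ z : ZMod p, |(quadraticChar (ZMod p) z : ℝ)| ≤ 1 := by
      intro z
      rcases quadraticChar_isQuadratic (ZMod p) z with h | h | h <;> rw [h] <;> simp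
    have h2 : |(quadraticChar (ZMod p) x : ℝ) + quadraticChar (ZMod p) (-x)| ≤ 2 :=
      (abs_add_le _ _).trans (by linarith [hb x, hb (-x)])
    gcongr
    linarith

lemma sum_pairCount (p : ℕ) [NeZero p] : ∑ x : ZMod p, (pairCount p x : ℝ) = (Nsq p : ℝ) ^ 2 := by
  simp_rw [pairCount_eq_sum]
  rw [Finset.sum_comm, Nsq_eq_sum, sq, Finset.sum_mul]
  refine Finset.sum_congr rfl fun y _ => ?_
  rw [← Finset.mul_sum]
  congr 1
  exact (Equiv.subLeft y).sum_comp (fun z => sqInd z)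

lemma sum_fluct (p : ℕ) [Fact p.Prime] (hp : p ≠ 2) : ∑ x : ZMod p, fluct p x = 1 := by
  have hp1 : (0 : ℝ) < (p : ℝ) + 1 := by positivity
  unfold fluct
  rw [Finset.sum_sub_distrib, ← Finset.sum_div, ← Finset.mul_sum, sum_pairCount, Nsq_prime p hp]
  simp [ZMod.card]
  field_simp
  ring

lemma sum_abs_fluct_le (p : ℕ) [Fact p.Prime] (hp : p ≠ 2) :
    ∑ x : ZMod p, |fluct p x| ≤ 3 := by
  have hp0 : (0 : ℝ) < p := by exact_mod_cast (Fact.out : p.Prime).pos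
  refine (Finset.sum_le_sum fun x _ => abs_fluct_le p hp x).trans ?_
  rw [Finset.sum_add_distrib]
  simp [ZMod.card]
  field_simp
  norm_num

/-! ### Multiplicativity -/

/-- Chinese remainder theorem: a sum over residues of a product of local functions factors. -/
lemma sum_prod_crt {ι : Type*} [Fintype ι] (n : ι → ℕ) [∀ i, NeZero (n i)] [NeZero (∏ i, n i)]
    (hc : Pairwise (Function.onFun Nat.Coprime n)) (F : ∀ i, ZMod (n i) → ℝ) :
    ∑ x : ZMod (∏ i, n i), ∏ i, F i (ZMod.prodEquivPi n hc x i) = ∏ i, ∑ x, F i x := by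
  rw [Finset.prod_univ_sum, Fintype.piFinset_univ]
  exact (ZMod.prodEquivPi n hc).toEquiv.sum_comp (fun y => ∏ i, F i (y i))

lemma sqInd_crt {ι : Type*} [Fintype ι] (n : ι → ℕ)
    (hc : Pairwise (Function.onFun Nat.Coprime n)) (x : ZMod (∏ i, n i)) :
    sqInd x = ∏ i, sqInd (ZMod.prodEquivPi n hc x i) := by
  unfold sqInd
  rw [Finset.prod_ite_zero]
  simp only [Finset.prod_const_one, Finset.mem_univ, true_implies]
  congr 1
  apply propext
  constructor
  · rintro ⟨z, rfl⟩ i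
    exact ⟨ZMod.prodEquivPi n hc z i, by rw [map_pow, Pi.pow_apply]⟩
  · intro h
    choose z hz using h
    refine ⟨(ZMod.prodEquivPi n hc).symm z, ?_⟩
    apply (ZMod.prodEquivPi n hc).injective
    funext i
    rw [map_pow, RingEquiv.apply_symm_apply, Pi.pow_apply, hz]

lemma Nsq_crt {ι : Type*} [Fintype ι] (n : ι → ℕ) [∀ i, NeZero (n i)] [NeZero (∏ i, n i)]
    (hc : Pairwise (Function.onFun Nat.Coprime n)) :
    (Nsq (∏ i, n i) : ℝ) = ∏ i, (Nsq (n i) : ℝ) := by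
  simp_rw [Nsq_eq_sum]
  rw [← sum_prod_crt n hc (fun i => sqInd)]
  exact Finset.sum_congr rfl fun x _ => sqInd_crt n hc x

lemma pairCount_crt {ι : Type*} [Fintype ι] (n : ι → ℕ) [∀ i, NeZero (n i)] [NeZero (∏ i, n i)]
    (hc : Pairwise (Function.onFun Nat.Coprime n)) (h : ℤ) :
    (pairCount (∏ i, n i) (h : ZMod (∏ i, n i)) : ℝ)
      = ∏ i, (pairCount (n i) (h : ZMod (n i)) : ℝ) := by
  simp_rw [pairCount_eq_sum]
  rw [← sum_prod_crt n hc (fun i y => sqInd y * sqInd (y - (h : ZMod (n i))))]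
  refine Finset.sum_congr rfl fun x _ => ?_
  rw [sqInd_crt n hc, sqInd_crt n hc, ← Finset.prod_mul_distrib]
  refine Finset.prod_congr rfl fun i _ => ?_
  rw [map_sub, map_intCast, Pi.sub_apply, Pi.intCast_apply]

/-! ### Residue classes in intervals -/

lemma card_filter_modEq_exact (c : ℕ) [NeZero c] (x y : ℝ) (r : ℤ) :
    ((Finset.Icc ⌈x⌉ ⌊y⌋).filter (fun h : ℤ => (h : ZMod c) = (r : ZMod c))).card
      = (⌊(y - r) / c⌋ + 1 - ⌈(x - r) / c⌉).toNat := by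
  have hc : (0 : ℝ) < c := by exact_mod_cast NeZero.pos c
  have hc' : (c : ℤ) ≠ 0 := by exact_mod_cast (NeZero.ne c)
  rw [← Int.card_Icc]
  symm
  refine Finset.card_bij (fun k _ => r + c * k) ?_ ?_ ?_
  · intro k hk
    rw [Finset.mem_Icc, Int.ceil_le, Int.le_floor, div_le_iff₀ hc, le_div_iff₀ hc] at hk
    rw [Finset.mem_filter, Finset.mem_Icc, Int.ceil_le, Int.le_floor]
    push_cast
    refine ⟨⟨by linarith, by linarith⟩, by simp⟩
  · intro k _ l _ h
    exact mul_left_cancel₀ hc' (add_left_cancel h)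
  · intro h hh
    rw [Finset.mem_filter, Finset.mem_Icc, Int.ceil_le, Int.le_floor] at hh
    obtain ⟨⟨h1, h2⟩, h3⟩ := hh
    rw [eq_comm, ZMod.intCast_eq_intCast_iff_dvd_sub] at h3
    obtain ⟨k, hk⟩ := h3
    have hk' : h = r + c * k := by linarith
    refine ⟨k, ?_, hk'.symm⟩
    rw [Finset.mem_Icc, Int.ceil_le, Int.le_floor, div_le_iff₀ hc, le_div_iff₀ hc]
    rw [hk'] at h1 h2
    push_cast at h1 h2
    exact ⟨by linarith, by linarith⟩

lemma card_filter_modEq (c : ℕ) [NeZero c] (x y : ℝ) (hxy : x ≤ y) (r : ZMod c) :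
    |(((Finset.Icc ⌈x⌉ ⌊y⌋).filter (fun h : ℤ => (h : ZMod c) = r)).card : ℝ)
      - (y - x) / c| ≤ 1 := by
  obtain ⟨r, rfl⟩ := ZMod.intCast_surjective r
  have hc : (0 : ℝ) < c := by exact_mod_cast NeZero.pos c
  rw [card_filter_modEq_exact]
  set u := (x - r) / c with hu
  set v := (y - r) / c with hv
  have huv : (y - x) / c = v - u := by rw [hu, hv]; ring
  have hle : u ≤ v := by
    rw [hu, hv]
    gcongr
  rw [huv]
  have h1 := Int.floor_le v
  have h2 := Int.lt_floor_add_one v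
  have h3 := Int.le_ceil u
  have h4 := Int.ceil_lt_add_one u
  have h5 : (0 : ℤ) ≤ ⌊v⌋ + 1 - ⌈u⌉ := by
    have : (-1 : ℝ) < ((⌊v⌋ + 1 - ⌈u⌉ : ℤ) : ℝ) := by push_cast; linarith
    have : (-1 : ℤ) < ⌊v⌋ + 1 - ⌈u⌉ := by exact_mod_cast this
    linarith
  have h6 : (((⌊v⌋ + 1 - ⌈u⌉).toNat : ℕ) : ℝ) = ⌊v⌋ + 1 - ⌈u⌉ := by
    have : (((⌊v⌋ + 1 - ⌈u⌉).toNat : ℤ)) = ⌊v⌋ + 1 - ⌈u⌉ := Int.toNat_of_nonneg h5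
    exact_mod_cast this
  rw [h6, abs_le]
  constructor <;> linarith

/-- An interval avoiding `0` contains at most `M / c` multiples of `c`, where `M` bounds its
elements in absolute value. For `c > M` this is where `0 ∉ I` enters. -/
lemma card_filter_dvd (c : ℕ) [NeZero c] (x y M : ℝ) (h0 : 0 < x ∨ y < 0)
    (hx : |x| ≤ M) (hy : |y| ≤ M) :
    (((Finset.Icc ⌈x⌉ ⌊y⌋).filter (fun h : ℤ => (h : ZMod c) = 0)).card : ℝ) ≤ M / c := by
  have hc : (0 : ℝ) < c := by exact_mod_cast NeZero.pos c
  have := card_filter_modEq_exact c x y 0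
  simp only [Int.cast_zero, sub_zero] at this
  rw [this]
  have hM : 0 ≤ M / c := div_nonneg ((abs_nonneg x).trans hx) hc.le
  have key : ((⌊y / c⌋ + 1 - ⌈x / c⌉ : ℤ) : ℝ) ≤ M / c := by
    push_cast
    rcases h0 with h | h
    · have h1 : (1 : ℤ) ≤ ⌈x / c⌉ := Int.one_le_ceil_iff.2 (div_pos h hc)
      have h1' : (1 : ℝ) ≤ ⌈x / c⌉ := by exact_mod_cast h1
      have h2 := Int.floor_le (y / c)
      have h3 : y / c ≤ M / c := by
        gcongr
        exact (le_abs_self y).trans hy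
      linarith
    · have h1 : ⌊y / c⌋ ≤ -1 := by
        have : ⌊y / c⌋ < 0 := Int.floor_lt.2 (by simpa using div_neg_of_neg_of_pos h hc)
        linarith
      have h1' : (⌊y / c⌋ : ℝ) ≤ -1 := by exact_mod_cast h1
      have h2 := Int.le_ceil (x / c)
      have h3 : -x / c ≤ M / c := by
        gcongr
        exact (neg_le_abs x).trans hx
      rw [neg_div] at h3
      linarith
  have h7 : (((⌊y / c⌋ + 1 - ⌈x / c⌉).toNat : ℕ) : ℝ) = max ((⌊y / c⌋ + 1 - ⌈x / c⌉ : ℤ) : ℝ) 0 := by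
    rw [← Int.cast_natCast, Int.toNat_eq_max, Int.cast_max, Int.cast_zero]
  rw [h7]
  exact max_le key hM

/-! ### The spacing and the pair count as products over primes -/

lemma pairwise_coprime_of_primes (T : Finset ℕ) (hT : ∀ p ∈ T, p.Prime) :
    Pairwise (Function.onFun Nat.Coprime (fun i : T => (i : ℕ))) := fun i j hij =>
  (Nat.coprime_primes (hT i i.2) (hT j j.2)).2 fun h => hij (Subtype.ext h)

lemma prod_coe_ne_zero (T : Finset ℕ) (hT : ∀ p ∈ T, p.Prime) : ∏ i : T, (i : ℕ) ≠ 0 :=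
  Finset.prod_ne_zero_iff.2 fun i _ => (hT i i.2).ne_zero

lemma meanSp_eq_prod (S : Finset ℕ) (hS : ∀ p ∈ S, p.Prime ∧ p ≠ 2) :
    meanSp (∏ p ∈ S, p) = ∏ p ∈ S, (2 * (p : ℝ) / (p + 1)) ∧
    (Nsq (∏ p ∈ S, p) : ℝ) = ∏ p ∈ S, (((p : ℝ) + 1) / 2) := by
  have hS' : ∀ p ∈ S, p.Prime := fun p hp => (hS p hp).1
  have i1 : ∀ i : S, NeZero (i : ℕ) := fun i => ⟨(hS' i i.2).ne_zero⟩
  have i2 : NeZero (∏ i : S, (i : ℕ)) := ⟨prod_coe_ne_zero S hS'⟩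
  have h2 : (Nsq (∏ p ∈ S, p) : ℝ) = ∏ p ∈ S, (((p : ℝ) + 1) / 2) := by
    rw [← Finset.prod_coe_sort S (fun p => p), Nsq_crt _ (pairwise_coprime_of_primes S hS'),
      ← Finset.prod_coe_sort S (fun p => ((p : ℝ) + 1) / 2)]
    refine Finset.prod_congr rfl fun i _ => ?_
    have : Fact (i : ℕ).Prime := ⟨hS' i i.2⟩
    exact Nsq_prime i (hS i i.2).2
  refine ⟨?_, h2⟩
  unfold meanSp
  rw [h2]
  push_cast
  rw [← Finset.prod_div_distrib]
  refine Finset.prod_congr rfl fun p _ => ?_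
  field_simp

/-- The local factor of `N(h, q) / N_q` is `(1 + fluct p h) / 2`. -/
lemma Npair_div_Nsq (S : Finset ℕ) (hS : ∀ p ∈ S, p.Prime ∧ p ≠ 2) (h : ℤ) :
    1 / (Nsq (∏ p ∈ S, p) : ℝ) * (Npair (∏ p ∈ S, p) h : ℝ)
      = (1 / 2) ^ S.card * ∏ p ∈ S, (1 + fluct p (h : ZMod p)) := by
  have hS' : ∀ p ∈ S, p.Prime := fun p hp => (hS p hp).1
  have i1 : ∀ i : S, NeZero (i : ℕ) := fun i => ⟨(hS' i i.2).ne_zero⟩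
  have i2 : NeZero (∏ i : S, (i : ℕ)) := ⟨prod_coe_ne_zero S hS'⟩
  have h2 : (Npair (∏ p ∈ S, p) h : ℝ) = ∏ p ∈ S, (pairCount p (h : ZMod p) : ℝ) := by
    rw [← Finset.prod_coe_sort S (fun p => p),
      ← Finset.prod_coe_sort S (fun p => (pairCount p (h : ZMod p) : ℝ))]
    exact pairCount_crt _ (pairwise_coprime_of_primes S hS') h
  rw [h2, (meanSp_eq_prod S hS).2, ← Finset.prod_const, one_div, ← Finset.prod_inv_distrib,
    ← Finset.prod_mul_distrib, ← Finset.prod_mul_distrib]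
  refine Finset.prod_congr rfl fun p _ => ?_
  have : (0 : ℝ) < (p : ℝ) + 1 := by positivity
  unfold fluct
  field_simp
  ring

/-! ### The error term attached to a divisor -/

/-- Error bound for small moduli: equidistribution of an interval in residue classes, with
error at most `1` in each class. -/
lemma sum_fluct_sub_le (T : Finset ℕ) (hT : ∀ p ∈ T, p.Prime ∧ p ≠ 2) (x y : ℝ) (hxy : x ≤ y) :
    |∑ h ∈ Finset.Icc ⌈x⌉ ⌊y⌋, ∏ p ∈ T, fluct p (h : ZMod p) - (y - x) / ∏ p ∈ T, (p : ℝ)|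
      ≤ 3 ^ T.card := by
  have hT' : ∀ p ∈ T, p.Prime := fun p hp => (hT p hp).1
  have i0 : ∀ i : T, Fact (i : ℕ).Prime := fun i => ⟨hT' i i.2⟩
  have i2 : NeZero (∏ i : T, (i : ℕ)) := ⟨prod_coe_ne_zero T hT'⟩
  have hc := pairwise_coprime_of_primes T hT'
  set c := ∏ i : T, (i : ℕ) with hcdef
  have hcc : ∏ p ∈ T, (p : ℝ) = (c : ℝ) := by
    rw [hcdef, Finset.prod_coe_sort T (fun p => p)]
    push_cast
    rfl
  let Φ : ZMod c → ℝ := fun z => ∏ i : T, fluct i (ZMod.prodEquivPi _ hc z i)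
  have h1 : ∀ h : ℤ, ∏ p ∈ T, fluct p (h : ZMod p) = Φ (h : ZMod c) := by
    intro h
    rw [← Finset.prod_coe_sort T (fun p => fluct p (h : ZMod p))]
    refine Finset.prod_congr rfl fun i _ => ?_
    rw [map_intCast, Pi.intCast_apply]
  have hsum : ∑ z, Φ z = 1 := by
    have := sum_prod_crt (fun i : T => (i : ℕ)) hc (fun i => fluct i)
    refine this.trans (Finset.prod_eq_one fun i _ => sum_fluct i (hT i i.2).2)
  have habs : ∑ z, |Φ z| ≤ 3 ^ T.card := by
    have := sum_prod_crt (fun i : T => (i : ℕ)) hc (fun i z => |fluct i z|)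
    simp_rw [Φ, Finset.abs_prod]
    rw [this, ← Finset.prod_const, ← Finset.prod_coe_sort T]
    exact Finset.prod_le_prod (fun i _ => Finset.sum_nonneg fun _ _ => abs_nonneg _)
      fun i _ => sum_abs_fluct_le i (hT i i.2).2
  have h3 : ∑ h ∈ Finset.Icc ⌈x⌉ ⌊y⌋, Φ (h : ZMod c) = ∑ z : ZMod c, Φ z *
      (((Finset.Icc ⌈x⌉ ⌊y⌋).filter (fun h : ℤ => (h : ZMod c) = z)).card : ℝ) := by
    rw [← Finset.sum_fiberwise (Finset.Icc ⌈x⌉ ⌊y⌋) (fun h : ℤ => (h : ZMod c))]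
    refine Finset.sum_congr rfl fun z _ => ?_
    rw [Finset.sum_congr rfl (g := fun _ => Φ z)
      (fun h hh => by rw [(Finset.mem_filter.1 hh).2]), Finset.sum_const, nsmul_eq_mul, mul_comm]
  have h4 : (y - x) / ∏ p ∈ T, (p : ℝ) = ∑ z, Φ z * ((y - x) / c) := by
    rw [← Finset.sum_mul, hsum, one_mul, hcc]
  simp_rw [h1]
  rw [h3, h4, ← Finset.sum_sub_distrib]
  refine (Finset.abs_sum_le_sum_abs _ _).trans (le_trans (Finset.sum_le_sum fun z _ => ?_) habs)
  rw [← mul_sub, abs_mul]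
  exact mul_le_of_le_one_right (abs_nonneg _) (card_filter_modEq c x y hxy z)

/-- Bound for large moduli: `fluct p h` is of size `1` only if `p ∣ h`, and an interval avoiding
`0` contains few multiples of a large integer. -/
lemma abs_sum_fluct_le (T : Finset ℕ) (hT : ∀ p ∈ T, p.Prime ∧ p ≠ 2) (x y M : ℝ)
    (h0 : 0 < x ∨ y < 0) (hx : |x| ≤ M) (hy : |y| ≤ M) :
    |∑ h ∈ Finset.Icc ⌈x⌉ ⌊y⌋, ∏ p ∈ T, fluct p (h : ZMod p)|
      ≤ M * (3 ^ T.card / ∏ p ∈ T, (p : ℝ)) := by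
  have hT' : ∀ p ∈ T, p.Prime := fun p hp => (hT p hp).1
  have hle : ∀ h : ℤ, |∏ p ∈ T, fluct p (h : ZMod p)| ≤ ∑ D ∈ T.powerset,
      (if (h : ZMod (∏ p ∈ D, p)) = 0 then (1 : ℝ) else 0) * ∏ p ∈ T \ D, (2 / (p : ℝ)) := by
    intro h
    rw [Finset.abs_prod]
    calc ∏ p ∈ T, |fluct p (h : ZMod p)|
        ≤ ∏ p ∈ T, ((if (h : ZMod p) = 0 then (1 : ℝ) else 0) + 2 / (p : ℝ)) := by
          refine Finset.prod_le_prod (fun _ _ => abs_nonneg _) fun p hp => ?_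
          have : Fact p.Prime := ⟨hT' p hp⟩
          exact abs_fluct_le p (hT p hp).2 _
      _ = ∑ D ∈ T.powerset, (∏ p ∈ D, if (h : ZMod p) = 0 then (1 : ℝ) else 0) *
            ∏ p ∈ T \ D, (2 / (p : ℝ)) := by rw [Finset.prod_add]
      _ ≤ _ := by
          refine Finset.sum_le_sum fun D hD => ?_
          have hD' := Finset.mem_powerset.1 hD
          refine mul_le_mul_of_nonneg_right ?_ (Finset.prod_nonneg fun _ _ => by positivity)
          rw [Finset.prod_ite_zero, Finset.prod_const_one]
          by_cases hall : ∀ p ∈ D, (h : ZMod p) = 0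
          · have : (h : ZMod (∏ p ∈ D, p)) = 0 := by
              rw [ZMod.intCast_zmod_eq_zero_iff_dvd]
              push_cast
              refine Finset.prod_dvd_of_coprime ?_ fun p hp =>
                (ZMod.intCast_zmod_eq_zero_iff_dvd h p).1 (hall p hp)
              intro p hp r hr hpr
              exact Nat.isCoprime_iff_coprime.2
                ((Nat.coprime_primes (hT' p (hD' hp)) (hT' r (hD' hr))).2 hpr)
            rw [if_pos hall, if_pos this]
          · rw [if_neg hall]
            split_ifs <;> norm_num
  calc |∑ h ∈ Finset.Icc ⌈x⌉ ⌊y⌋, ∏ p ∈ T, fluct p (h : ZMod p)|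
      ≤ ∑ h ∈ Finset.Icc ⌈x⌉ ⌊y⌋, ∑ D ∈ T.powerset,
        (if (h : ZMod (∏ p ∈ D, p)) = 0 then (1 : ℝ) else 0) * ∏ p ∈ T \ D, (2 / (p : ℝ)) :=
        (Finset.abs_sum_le_sum_abs _ _).trans (Finset.sum_le_sum fun h _ => hle h)
    _ = ∑ D ∈ T.powerset, (((Finset.Icc ⌈x⌉ ⌊y⌋).filter
          (fun h : ℤ => (h : ZMod (∏ p ∈ D, p)) = 0)).card : ℝ) *
            ∏ p ∈ T \ D, (2 / (p : ℝ)) := by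
        rw [Finset.sum_comm]
        refine Finset.sum_congr rfl fun D _ => ?_
        rw [← Finset.sum_mul, Finset.sum_boole]
    _ ≤ ∑ D ∈ T.powerset, M * ((∏ p ∈ D, (1 / (p : ℝ))) * ∏ p ∈ T \ D, (2 / (p : ℝ))) := by
        refine Finset.sum_le_sum fun D hD => ?_
        have hD' := Finset.mem_powerset.1 hD
        have : NeZero (∏ p ∈ D, p) :=
          ⟨Finset.prod_ne_zero_iff.2 fun p hp => (hT' p (hD' hp)).ne_zero⟩
        rw [← mul_assoc]
        refine mul_le_mul_of_nonneg_right ?_ (Finset.prod_nonneg fun _ _ => by positivity)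
        refine (card_filter_dvd _ x y M h0 hx hy).trans_eq ?_
        simp [div_eq_mul_inv]
    _ = M * (3 ^ T.card / ∏ p ∈ T, (p : ℝ)) := by
        rw [← Finset.mul_sum, ← Finset.prod_add, ← Finset.prod_const, ← Finset.prod_div_distrib]
        congr 1
        refine Finset.prod_congr rfl fun p _ => ?_
        ring

/-- Both bounds combined, interpolating by `min (1, t) ≤ t ^ δ`. -/
lemma fluct_error_le (T : Finset ℕ) (hT : ∀ p ∈ T, p.Prime ∧ p ≠ 2) (a b s δ : ℝ) (hab : a ≤ b)
    (h0 : 0 < a ∨ b < 0) (hs : 1 ≤ s) (hδ : 0 < δ) (hδ1 : δ ≤ 1) :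
    |∑ h ∈ Finset.Icc ⌈s * a⌉ ⌊s * b⌋, ∏ p ∈ T, fluct p (h : ZMod p)
        - s * (b - a) * ∏ p ∈ T, (1 / (p : ℝ))|
      ≤ (1 + 2 * (|a| + |b|)) * s ^ δ * ∏ p ∈ T, (3 / (p : ℝ) ^ δ) := by
  have hT' : ∀ p ∈ T, p.Prime := fun p hp => (hT p hp).1
  have hs0 : 0 < s := by linarith
  set m := |a| + |b| with hm
  have hm0 : 0 ≤ m := by positivity
  set c := ∏ p ∈ T, (p : ℝ) with hc
  have hc0 : 0 < c := Finset.prod_pos fun p hp => by exact_mod_cast (hT' p hp).pos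
  have e1 := sum_fluct_sub_le T hT (s * a) (s * b) (by gcongr)
  have e2 := abs_sum_fluct_le T hT (s * a) (s * b) (s * m)
    (h0.imp (fun h => mul_pos hs0 h) (fun h => mul_neg_of_pos_of_neg hs0 h))
    (by rw [abs_mul, abs_of_pos hs0]; gcongr; linarith [abs_nonneg b])
    (by rw [abs_mul, abs_of_pos hs0]; gcongr; linarith [abs_nonneg a])
  have hinv : s * (b - a) * ∏ p ∈ T, (1 / (p : ℝ)) = (s * b - s * a) / c := by
    simp only [one_div, Finset.prod_inv_distrib]
    rw [← hc]
    ring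
  have hprod : ∏ p ∈ T, (3 / (p : ℝ) ^ δ) = 3 ^ T.card / c ^ δ := by
    rw [Finset.prod_div_distrib, Finset.prod_const, hc,
      Real.finsetProd_rpow T (fun p => (p : ℝ)) (fun _ _ => by positivity)]
  rw [hinv, hprod]
  set E := ∑ h ∈ Finset.Icc ⌈s * a⌉ ⌊s * b⌋, ∏ p ∈ T, fluct p (h : ZMod p) with hE
  have hfin : (1 + 2 * m) * s ^ δ * (3 ^ T.card / c ^ δ) =
      (1 + 2 * m) * (3 ^ T.card * (s / c) ^ δ) := by
    rw [Real.div_rpow hs0.le hc0.le]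
    ring
  rw [hfin]
  have h3 : (0 : ℝ) < 3 ^ T.card := by positivity
  rcases le_total c s with h | h
  · have hpow : 1 ≤ (s / c) ^ δ := Real.one_le_rpow ((one_le_div hc0).2 h) hδ.le
    calc |E - (s * b - s * a) / c| ≤ 1 * (3 ^ T.card * 1) := by rw [one_mul, mul_one]; exact e1
      _ ≤ _ := by
        gcongr
        linarith
  · have ht1 : s / c ≤ 1 := (div_le_one hc0).2 h
    have ht0 : 0 < s / c := div_pos hs0 hc0
    have hpow : s / c ≤ (s / c) ^ δ := by
      conv_lhs => rw [← Real.rpow_one (s / c)]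
      exact Real.rpow_le_rpow_of_exponent_ge ht0 ht1 hδ1
    have hba : b - a ≤ m := by rw [hm]; linarith [le_abs_self b, neg_le_abs a]
    have h31 : (1 : ℝ) ≤ 3 ^ T.card := one_le_pow₀ (by norm_num)
    have e3 : |(s * b - s * a) / c| ≤ m * (3 ^ T.card * (s / c)) := by
      rw [show (s * b - s * a) / c = (b - a) * (1 * (s / c)) by ring,
        abs_of_nonneg (mul_nonneg (by linarith) (by linarith))]
      gcongr
    have e2' : |E| ≤ m * (3 ^ T.card * (s / c)) := by
      refine e2.trans_eq ?_
      ring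
    calc |E - (s * b - s * a) / c| ≤ |E| + |(s * b - s * a) / c| := abs_sub _ _
      _ ≤ (2 * m) * (3 ^ T.card * (s / c)) := by linarith
      _ ≤ _ := by
        gcongr
        linarith

/-! ### Summing the errors -/

/-- All but boundedly many integers `n` have `2 ^ (-δ) * (1 + 3 / n ^ δ) ≤ 1`, so a product of
such factors over distinct integers is bounded. -/
lemma exists_prod_bound (δ : ℝ) (hδ : 0 < δ) : ∃ K > 0, ∀ S : Finset ℕ,
    ∏ p ∈ S, ((2 : ℝ) ^ (-δ) * (1 + 3 / (p : ℝ) ^ δ)) ≤ K := by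
  have h2 : (2 : ℝ) ^ (-δ) < 1 := Real.rpow_lt_one_of_one_lt_of_neg one_lt_two (by linarith)
  have ht : Filter.Tendsto (fun n : ℕ => (2 : ℝ) ^ (-δ) * (1 + 3 / (n : ℝ) ^ δ)) Filter.atTop
      (nhds ((2 : ℝ) ^ (-δ) * (1 + 0))) :=
    ((((tendsto_rpow_atTop hδ).comp tendsto_natCast_atTop_atTop).const_div_atTop 3).const_add
      1).const_mul _
  obtain ⟨P, hP⟩ := Filter.eventually_atTop.1
    (ht.eventually_le_const (by rw [add_zero, mul_one]; exact h2))
  refine ⟨4 ^ P, by positivity, fun S => ?_⟩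
  have hloc : ∀ p ∈ S, (2 : ℝ) ^ (-δ) * (1 + 3 / (p : ℝ) ^ δ) ≤ if p < P then 4 else 1 := by
    intro p _
    split_ifs with h
    · have h3 : 3 / (p : ℝ) ^ δ ≤ 3 := by
        rcases Nat.eq_zero_or_pos p with rfl | hp
        · simp [Real.zero_rpow hδ.ne']
        · exact div_le_self (by norm_num) (Real.one_le_rpow (by exact_mod_cast hp) hδ.le)
      calc (2 : ℝ) ^ (-δ) * (1 + 3 / (p : ℝ) ^ δ) ≤ 1 * (1 + 3) := by gcongr
        _ = 4 := by norm_num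
    · exact hP p (not_lt.1 h)
  calc ∏ p ∈ S, ((2 : ℝ) ^ (-δ) * (1 + 3 / (p : ℝ) ^ δ))
      ≤ ∏ p ∈ S, (if p < P then (4 : ℝ) else 1) :=
        Finset.prod_le_prod (fun _ _ => by positivity) hloc
    _ = 4 ^ (S.filter (· < P)).card := by
        rw [Finset.prod_ite, Finset.prod_const_one, mul_one, Finset.prod_const]
    _ ≤ 4 ^ P := by
        refine pow_le_pow_right₀ (by norm_num) ?_
        refine (Finset.card_le_card (t := Finset.range P) fun x hx => ?_).trans_eq
          (Finset.card_range P)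
        exact Finset.mem_range.2 (Finset.mem_filter.1 hx).2

/-- Kurlberg–Rudnick, pair correlation theorem: for a bounded closed interval `I` not
containing `0`, and odd squarefree `q`, `R_2(I,q) = |I| + O(s^{-1+ε})`. -/
theorem statement1 (a b : ℝ) (hab : a ≤ b) (h0 : (0 : ℝ) ∉ Set.Icc a b)
    (ε : ℝ) (hε : 0 < ε) :
    ∃ K > 0, ∀ q : ℕ, Odd q → Squarefree q →
      |R2corr q (Set.Icc a b) - (b - a)| ≤ K * meanSp q ^ (-(1 : ℝ) + ε) := by
  -- The exponent `δ = ε' / 2` of the interpolation must be at most `1`.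
  set ε' := min ε 1 with hε'
  have hε0 : 0 < ε' := lt_min hε one_pos
  have hε1 : ε' ≤ 1 := min_le_right _ _
  have h0' : 0 < a ∨ b < 0 := by
    by_contra! hcon
    exact h0 ⟨hcon.1, hcon.2⟩
  obtain ⟨K, hK, hbound⟩ := exists_prod_bound (ε' / 2) (by linarith)
  refine ⟨(1 + 2 * (|a| + |b|)) * K, by positivity, fun q hodd hsq => ?_⟩
  obtain ⟨S, hS, rfl⟩ : ∃ S : Finset ℕ, (∀ p ∈ S, p.Prime ∧ p ≠ 2) ∧ q = ∏ p ∈ S, p := by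
    refine ⟨q.primeFactors, fun p hp => ⟨Nat.prime_of_mem_primeFactors hp, ?_⟩,
      (Nat.prod_primeFactors_of_squarefree hsq).symm⟩
    rintro rfl
    exact (Nat.not_even_iff_odd.2 hodd) (even_iff_two_dvd.2 (Nat.dvd_of_mem_primeFactors hp))
  have hs := (meanSp_eq_prod S hS).1
  set s := meanSp (∏ p ∈ S, p) with hsdef
  have hp1 : ∀ p ∈ S, (1 : ℝ) ≤ p := fun p hp => by exact_mod_cast (hS p hp).1.one_le
  have hfac : ∀ p ∈ S, 1 ≤ 2 * (p : ℝ) / (p + 1) := fun p hp => by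
    rw [le_div_iff₀ (by positivity)]
    linarith [hp1 p hp]
  have hs1 : 1 ≤ s := by
    rw [hs]
    exact Finset.prod_const_one.symm.le.trans
      (Finset.prod_le_prod (fun _ _ => zero_le_one) hfac)
  have hs0 : 0 < s := by linarith
  have hs2 : s ≤ 2 ^ S.card := by
    rw [hs, ← Finset.prod_const]
    refine Finset.prod_le_prod (fun p hp => by positivity) fun p hp => ?_
    rw [div_le_iff₀ (by positivity)]
    linarith
  -- The main term: the average over `h` of each expanded product is `1 / ∏ p`.
  have hmain : b - a = (1 / 2) ^ S.card *
      ∑ T ∈ S.powerset, s * (b - a) * ∏ p ∈ T, (1 / (p : ℝ)) := by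
    rw [← Finset.mul_sum, ← Finset.prod_one_add, hs]
    have : (1 / 2 : ℝ) ^ S.card * ((∏ p ∈ S, (2 * (p : ℝ) / (p + 1))) *
        ∏ p ∈ S, (1 + 1 / (p : ℝ))) = 1 := by
      rw [← Finset.prod_const, ← Finset.prod_mul_distrib, ← Finset.prod_mul_distrib]
      refine Finset.prod_eq_one fun p hp => ?_
      have : (0 : ℝ) < p := by linarith [hp1 p hp]
      field_simp
    linear_combination (-(b - a)) * this
  have hR : R2corr (∏ p ∈ S, p) (Set.Icc a b) = (1 / 2) ^ S.card *
      ∑ T ∈ S.powerset, ∑ h ∈ Finset.Icc ⌈s * a⌉ ⌊s * b⌋, ∏ p ∈ T, fluct p (h : ZMod p) := by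
    unfold R2corr
    rw [← hsdef, LinearOrderedField.smul_Icc hs0]
    have hmem : ∀ h : ℤ, (h : ℝ) ∈ Set.Icc (s * a) (s * b) ↔
        h ∈ Finset.Icc ⌈s * a⌉ ⌊s * b⌋ := by
      intro h
      rw [Set.mem_Icc, Finset.mem_Icc, Int.ceil_le, Int.le_floor]
    rw [finsum_eq_sum_of_support_subset (s := Finset.Icc ⌈s * a⌉ ⌊s * b⌋)]
    · rw [Finset.mul_sum, Finset.sum_comm, Finset.mul_sum]
      refine Finset.sum_congr rfl fun h hh => ?_
      rw [if_pos ((hmem h).2 hh), Npair_div_Nsq S hS h, Finset.prod_one_add]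
    · intro h hh
      rw [Function.mem_support] at hh
      by_contra hcon
      exact hh (if_neg fun hin => hcon ((hmem h).1 hin))
  -- Subtract termwise over the divisors `∏ p ∈ T, p` of `q` and resum the error bounds.
  have hdiff : |R2corr (∏ p ∈ S, p) (Set.Icc a b) - (b - a)| ≤
      (1 / 2) ^ S.card * ((1 + 2 * (|a| + |b|)) * s ^ (ε' / 2) *
        ∏ p ∈ S, (1 + 3 / (p : ℝ) ^ (ε' / 2))) := by
    conv_lhs => rw [hR, hmain]
    rw [← mul_sub, ← Finset.sum_sub_distrib, abs_mul, abs_of_pos (by positivity),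
      Finset.prod_one_add, Finset.mul_sum (s := S.powerset)]
    refine mul_le_mul_of_nonneg_left ?_ (by positivity)
    refine (Finset.abs_sum_le_sum_abs _ _).trans (Finset.sum_le_sum fun T hT => ?_)
    exact fluct_error_le T (fun p hp => hS p (Finset.mem_powerset.1 hT hp)) a b s (ε' / 2) hab h0'
      hs1 (by linarith) (by linarith)
  have hB := hbound S
  -- Together with `s ≤ 2 ^ ω(q)` this turns the loss `2 ^ (-ω(q))` into local factors
  -- `2 ^ (-ε' / 2)`, as in `exists_prod_bound`.
  have hpw : s ^ (ε' / 2) = s ^ (-1 + ε') * s ^ (1 - ε' / 2) := by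
    rw [← Real.rpow_add hs0]
    congr 1
    ring
  have hs3 : s ^ (1 - ε' / 2) ≤ ((2 : ℝ) ^ S.card) ^ (1 - ε' / 2) :=
    Real.rpow_le_rpow hs0.le hs2 (by linarith)
  have hs4 : (1 / 2 : ℝ) ^ S.card * ((2 : ℝ) ^ S.card) ^ (1 - ε' / 2)
      = ((2 : ℝ) ^ (-(ε' / 2))) ^ S.card := by
    have h2 : (0 : ℝ) < 2 := two_pos
    rw [← Real.rpow_natCast 2, ← Real.rpow_mul h2.le, ← Real.rpow_natCast (2 ^ (-(ε' / 2))),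
      ← Real.rpow_mul h2.le, one_div, ← Real.rpow_neg_one, ← Real.rpow_natCast,
      ← Real.rpow_mul h2.le, ← Real.rpow_add h2]
    congr 1
    ring
  have hmono : s ^ (-1 + ε') ≤ s ^ (-1 + ε) :=
    Real.rpow_le_rpow_of_exponent_le hs1 (by linarith [min_le_left ε 1])
  have hC : 0 ≤ 1 + 2 * (|a| + |b|) := by positivity
  have hP : 0 ≤ ∏ p ∈ S, (1 + 3 / (p : ℝ) ^ (ε' / 2)) :=
    Finset.prod_nonneg fun p _ => by positivity
  calc |R2corr (∏ p ∈ S, p) (Set.Icc a b) - (b - a)|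
      ≤ (1 + 2 * (|a| + |b|)) * s ^ (-1 + ε') * ((1 / 2) ^ S.card * s ^ (1 - ε' / 2) *
        ∏ p ∈ S, (1 + 3 / (p : ℝ) ^ (ε' / 2))) := by
        refine hdiff.trans_eq ?_
        rw [hpw]
        ring
    _ ≤ (1 + 2 * (|a| + |b|)) * s ^ (-1 + ε') * ((1 / 2) ^ S.card *
        ((2 : ℝ) ^ S.card) ^ (1 - ε' / 2) * ∏ p ∈ S, (1 + 3 / (p : ℝ) ^ (ε' / 2))) := by
        gcongr
    _ ≤ (1 + 2 * (|a| + |b|)) * s ^ (-1 + ε) * K := by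
        rw [hs4, ← Finset.prod_const, ← Finset.prod_mul_distrib]
        gcongr
    _ = (1 + 2 * (|a| + |b|)) * K * s ^ (-1 + ε) := by ring
end

section
/- Let q' be an odd squarefree positive integer and q = 2q'. Then N_q = 2·N_{q'}, s_q = s_{q'}, and for every integer r ≥ 2 and every bounded set C ⊆ ℝ^{r−1} one has R_r(C,q) = R_r(C,q'). -/
/-!
The Chinese remainder theorem identifies `ZMod (2 * q')` with `ZMod 2 × ZMod q'`, and being a
square, or having prescribed integer differences, can be tested in each factor. Hence both `Nsq`
and `Ntup` are multiplicative along `2 * q'` (`card_sq_prod`, `card_tup_prod`).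
Modulo 2 every element is a square, so `Nsq 2 = 2`, and a tuple with prescribed consecutive
differences is determined by its first entry, which is arbitrary, so `Ntup r 2 h = 2`
(`Ntup_two`). Thus `Nsq` and every `Ntup` are doubled on passing from `q'` to `2 * q'`. The mean
spacing is unchanged, so the same `h` occur in both correlation sums, and the factor 2 cancels
against the normalisation `1 / Nsq`.
-/

open scoped Pointwise Classical

/-- `N(h,q)`: the number of `r`-tuples `(y_1, …, y_r)` of squares modulo `q`
with `y_i - y_{i+1} ≡ h_i (mod q)` for `1 ≤ i ≤ r-1`. -/
noncomputable def Ntup (r q : ℕ) (h : Fin (r - 1) → ℤ) : ℕ :=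
  Nat.card {y : Fin r → ZMod q //
    (∀ i, ∃ z : ZMod q, z ^ 2 = y i) ∧
    ∀ i : Fin (r - 1),
      y ⟨i.1, by have := i.2; omega⟩ - y ⟨i.1 + 1, by have := i.2; omega⟩ = (h i : ZMod q)}

/-- The `r`-level correlation `R_r(C,q) = (1/N_q) ∑_{h ∈ s_q C ∩ ℤ^{r-1}} N(h,q)`. -/
noncomputable def Rcorr (r q : ℕ) (C : Set (Fin (r - 1) → ℝ)) : ℝ :=
  (1 / (Nsq q : ℝ)) * ∑ᶠ h : Fin (r - 1) → ℤ,
    if (fun i => (h i : ℝ)) ∈ meanSp q • C then (Ntup r q h : ℝ) else 0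

/-- `y` is an `r`-tuple of squares in `R` with consecutive differences `h`. -/
def IsTup (r : ℕ) (R : Type) [CommRing R] (h : Fin (r - 1) → ℤ) (y : Fin r → R) : Prop :=
  (∀ i, ∃ z : R, z ^ 2 = y i) ∧
    ∀ i : Fin (r - 1),
      y ⟨i.1, by have := i.2; omega⟩ - y ⟨i.1 + 1, by have := i.2; omega⟩ = (h i : R)

lemma sq_prod_iff {R A B : Type} [CommRing R] [CommRing A] [CommRing B] (e : R ≃+* A × B)
    (x : R) : (∃ z, z ^ 2 = x) ↔ (∃ z, z ^ 2 = (e x).1) ∧ (∃ z, z ^ 2 = (e x).2) := by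
  constructor
  · rintro ⟨z, rfl⟩
    exact ⟨⟨(e z).1, by simp⟩, ⟨(e z).2, by simp⟩⟩
  · rintro ⟨⟨a, ha⟩, ⟨b, hb⟩⟩
    refine ⟨e.symm (a, b), e.injective ?_⟩
    rw [map_pow, e.apply_symm_apply]
    exact Prod.ext ha hb

lemma card_sq_prod {R A B : Type} [CommRing R] [CommRing A] [CommRing B] (e : R ≃+* A × B) :
    Nat.card {x : R // ∃ y : R, y ^ 2 = x} =
      Nat.card {x : A // ∃ y : A, y ^ 2 = x} * Nat.card {x : B // ∃ y : B, y ^ 2 = x} := by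
  rw [← Nat.card_prod]
  refine Nat.card_congr ((e.toEquiv.subtypeEquiv (q := fun p : A × B =>
    (∃ z, z ^ 2 = p.1) ∧ (∃ z, z ^ 2 = p.2)) fun x => sq_prod_iff e x).trans
    (Equiv.subtypeProdEquivProd (p := fun x : A => ∃ y, y ^ 2 = x)
      (q := fun x : B => ∃ y, y ^ 2 = x)))

lemma isTup_prod_iff {R A B : Type} [CommRing R] [CommRing A] [CommRing B] (e : R ≃+* A × B)
    (r : ℕ) (h : Fin (r - 1) → ℤ) (y : Fin r → R) :
    IsTup r R h y ↔ IsTup r A h (fun i => (e (y i)).1) ∧ IsTup r B h (fun i => (e (y i)).2) := by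
  have key : ∀ (a b : R) (n : ℤ),
      a - b = n ↔ (e a).1 - (e b).1 = n ∧ (e a).2 - (e b).2 = n := by
    intro a b n
    rw [← e.injective.eq_iff, map_sub, map_intCast, Prod.ext_iff]
    simp
  simp only [IsTup, sq_prod_iff e, key, forall_and]
  tauto

lemma card_tup_prod {R A B : Type} [CommRing R] [CommRing A] [CommRing B] (e : R ≃+* A × B)
    (r : ℕ) (h : Fin (r - 1) → ℤ) :
    Nat.card {y // IsTup r R h y} =
      Nat.card {y // IsTup r A h y} * Nat.card {y // IsTup r B h y} := by
  rw [← Nat.card_prod]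
  refine Nat.card_congr ((((Equiv.piCongrRight fun _ : Fin r => e.toEquiv).trans
    (Equiv.arrowProdEquivProdArrow (Fin r) (fun _ => A) (fun _ => B))).subtypeEquiv
    (q := fun p => IsTup r A h p.1 ∧ IsTup r B h p.2)
      fun y => isTup_prod_iff e r h y).trans
    (Equiv.subtypeProdEquivProd (p := IsTup r A h) (q := IsTup r B h)))

lemma sq_two (x : ZMod 2) : ∃ z : ZMod 2, z ^ 2 = x := ⟨x, by revert x; decide⟩

lemma Nsq_two : Nsq 2 = 2 := by
  unfold Nsq
  rw [Nat.card_congr (Equiv.subtypeUnivEquiv sq_two), Nat.card_zmod]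

/-- Evaluation at the first entry is a bijection from the tuples modulo 2 with consecutive
differences `h` onto `ZMod 2`. -/
lemma Ntup_two (r : ℕ) (hr : 2 ≤ r) (h : Fin (r - 1) → ℤ) : Ntup r 2 h = 2 := by
  change Nat.card {y // IsTup r (ZMod 2) h y} = 2
  refine (Nat.card_congr (Equiv.ofBijective
    (fun y : {y // IsTup r (ZMod 2) h y} => y.1 ⟨0, by omega⟩) ⟨?_, ?_⟩)).trans (Nat.card_zmod 2)
  · rintro ⟨y, hy⟩ ⟨w, hw⟩ h0
    have h0' : y ⟨0, by omega⟩ = w ⟨0, by omega⟩ := h0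
    have key : ∀ n (hn : n < r), y ⟨n, hn⟩ = w ⟨n, hn⟩ := by
      intro n
      induction n with
      | zero => intro _; exact h0'
      | succ n ih =>
        intro hn
        have h1 := hy.2 ⟨n, by omega⟩
        have h2 := hw.2 ⟨n, by omega⟩
        have h3 := ih (by omega)
        simp only at h1 h2
        linear_combination h2 - h1 + h3
    exact Subtype.ext (funext fun i => key i.1 i.2)
  · intro a
    -- The tuple starting at `a` is `a` minus the partial sums of `h`.
    refine ⟨⟨fun i => a - ∑ j ∈ Finset.range i.1,
      if hj : j < r - 1 then (h ⟨j, hj⟩ : ZMod 2) else 0, fun i => sq_two _, fun i => ?_⟩, ?_⟩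
    · simp [Finset.sum_range_succ]
    · simp

/-- Kurlberg–Rudnick, Section 3 (reduction to odd `q`): for `q = 2q'` with `q'` odd and
squarefree, `N_q = 2N_{q'}`, `s_q = s_{q'}`, and `R_r(C,q) = R_r(C,q')`. -/
theorem statement4 (q' : ℕ) (hodd : Odd q') (hsf : Squarefree q') :
    Nsq (2 * q') = 2 * Nsq q' ∧ meanSp (2 * q') = meanSp q' ∧
    ∀ r : ℕ, 2 ≤ r → ∀ C : Set (Fin (r - 1) → ℝ), Bornology.IsBounded C →
      Rcorr r (2 * q') C = Rcorr r q' C := by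
  have hcop : Nat.Coprime 2 q' := hodd.coprime_two_left
  have hN : Nsq (2 * q') = 2 * Nsq q' := by
    have h := card_sq_prod (ZMod.chineseRemainder hcop)
    change Nsq (2 * q') = Nsq 2 * Nsq q' at h
    rwa [Nsq_two] at h
  have hm : meanSp (2 * q') = meanSp q' := by
    unfold meanSp
    rw [hN]
    push_cast
    exact mul_div_mul_left _ _ two_ne_zero
  refine ⟨hN, hm, fun r hr C _ => ?_⟩
  have hT : ∀ h, Ntup r (2 * q') h = 2 * Ntup r q' h := by
    intro h
    have h' := card_tup_prod (ZMod.chineseRemainder hcop) r h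
    change Ntup r (2 * q') h = Ntup r 2 h * Ntup r q' h at h'
    rwa [Ntup_two r hr h] at h'
  unfold Rcorr
  rw [hm, hN]
  have hs : ∀ h : Fin (r - 1) → ℤ,
      (if (fun i => (h i : ℝ)) ∈ meanSp q' • C then (Ntup r (2 * q') h : ℝ) else 0) =
      2 * (if (fun i => (h i : ℝ)) ∈ meanSp q' • C then (Ntup r q' h : ℝ) else 0) := by
    intro h
    rw [hT h]
    split_ifs <;> simp
  rw [finsum_congr hs, ← mul_finsum, ← mul_assoc]
  congr 1
  push_cast
  rw [one_div, one_div, mul_inv, mul_right_comm, inv_mul_cancel₀ two_ne_zero, one_mul]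
end

section
/- For every integer r ≥ 2 there is a constant C_r > 0 such that for every odd prime p and every h ∈ (ℤ/pℤ)^{r−1}, |2^{r_eff(h)} · N_r(h,p) − p| ≤ C_r · p^{1/2}. -/
/-!
Writing `χ` for the quadratic character, a tuple counted by `NrP` is determined by `x = y_1`, the
other entries being `x - b` with `b` in the set `B` of partial sums (`NrP_eq`). Off `B`,
`2 ^ |B|` times the indicator that all `x - b` are squares is `∏ (1 + χ (x - b))`, and expanding
this product gives the main term `p` together with the sums `∑ₓ χ (∏_{t ∈ T} (x - t))` over the
nonempty `T ⊆ B` (`count_squares_bound`). So the theorem reduces to Weil's bound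
`O(|T| √p)` for these sums (`charSum_bound`), which is proved by Stepanov's method.

Let `f = ∏ (X - t)` have degree `m`, and `g = f ^ ((p-1)/2)`, so `g(x) = χ(f(x))` in `ℤ/pℤ`. It is
enough to show that for `a = ±1` the value `a` is taken by `g` at most `p/2 + O(m√p)` times, as the
two counts add up to at least `p - m`. Consider
`P = f ^ l * ∑_{j < J} (r_j + g s_j) X ^ (j p)` with `r_j, s_j` of degree `< d ≈ (p - m)/2`.
* Since `X ^ (j p)` has zero derivative, `P^(k)` is `f ^ (l - k)` times an expression of the same
  shape (`iterate_derivative_eq`); at a point with `g(x) = a` it becomes, using `x ^ p = x`, a value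
  of a polynomial of degree `< d + l m + J`. Requiring these polynomials to vanish for all `k < l`
  is a homogeneous linear system with fewer equations than unknowns (`exists_coeffs`).
* A nonzero solution has `P ≠ 0` (`relation_trivial`, `layer_eq_zero`): otherwise, modulo `X ^ p`,
  the lowest nonzero layer satisfies `f r² = f(0) s²`, impossible as `f` has a simple root. Here
  `f(0) ≠ 0` is needed, which a translation of `T` provides.
* So every such point is a root of `P` of multiplicity at least `l`, and `l` times their number is
  at most `deg P ≈ J p` (`stepanov_count`). Taking `l = 2⌊√p⌋` and `J = l/2 + O(m)` gives the bound
  (`card_pow_eq_le`).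
-/

/-- The partial sums `b_1(h) = 0`, `b_j(h) = h_1 + ⋯ + h_{j-1}` (0-indexed: `bsum h j`
is the sum of `h k` over `k < j`). -/
def bsum (r p : ℕ) (h : Fin (r - 1) → ZMod p) (j : Fin r) : ZMod p :=
  ∑ k ∈ Finset.univ.filter (fun k : Fin (r - 1) => (k : ℕ) < (j : ℕ)), h k

/-- `r_eff(h)`: the number of distinct values among `b_1(h), …, b_r(h)`. -/
def reff (r p : ℕ) (h : Fin (r - 1) → ZMod p) : ℕ :=
  (Finset.image (bsum r p h) Finset.univ).card

/-- `N_r(h,p)`: the number of `r`-tuples `(y_1, …, y_r)` of squares modulo `p` with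
`y_i - y_{i+1} = h_i` in `ℤ/pℤ` for `1 ≤ i ≤ r-1`. -/
noncomputable def NrP (r p : ℕ) (h : Fin (r - 1) → ZMod p) : ℕ :=
  Nat.card {y : Fin r → ZMod p //
    (∀ i, ∃ z : ZMod p, z ^ 2 = y i) ∧
    ∀ i : Fin (r - 1),
      y ⟨i.1, by have := i.2; omega⟩ - y ⟨i.1 + 1, by have := i.2; omega⟩ = h i}

/-! ### Derivatives of the auxiliary polynomial -/

open Polynomial in
/-- The operator `derivFactor f e k` with
`derivative^[k] (f ^ e * r) = f ^ (e - k) * derivFactor f e k r` for `k ≤ e`. The subtraction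
`e - k` is that of `ℕ`, so the operator is meaningful only in this range. -/
noncomputable def derivFactor {K : Type*} [Field K] (f : K[X]) (e : ℕ) :
    ℕ → (K[X] →ₗ[K] K[X])
  | 0 => LinearMap.id
  | k + 1 => (LinearMap.mulLeft K (((e - k : ℕ) : K[X]) * derivative f) +
      LinearMap.mulLeft K f ∘ₗ derivative) ∘ₗ derivFactor f e k

namespace Stepanov

open Polynomial

variable {p : ℕ} [Fact p.Prime]

lemma iterate_derivative_eq (f : (ZMod p)[X]) (e : ℕ) (r : (ZMod p)[X]) (j k : ℕ) (hk : k ≤ e) :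
    derivative^[k] (f ^ e * r * X ^ (j * p)) =
      f ^ (e - k) * derivFactor f e k r * X ^ (j * p) := by
  induction k with
  | zero => simp [derivFactor]
  | succ k ih =>
    rw [Function.iterate_succ_apply', ih (by omega)]
    obtain ⟨n, hn⟩ : ∃ n, e - k = n + 1 := ⟨e - k - 1, by omega⟩
    have hn' : e - (k + 1) = n := by omega
    have hX : derivative ((X : (ZMod p)[X]) ^ (j * p)) = 0 := by
      simp [derivative_X_pow]
    simp only [derivFactor, LinearMap.comp_apply, LinearMap.add_apply, LinearMap.mulLeft_apply,
      hn, hn', derivative_mul, hX, derivative_pow_succ]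
    simp only [Nat.cast_add, Nat.cast_one, map_add, map_natCast, map_one]
    ring

lemma derivFactor_degree (f : (ZMod p)[X]) (m : ℕ) (hf : f.natDegree ≤ m) (e : ℕ)
    (r : (ZMod p)[X]) (d : ℕ) (hr : r.degree < d) (k : ℕ) :
    (derivFactor f e k r).degree < (d + k * m : ℕ) := by
  induction k with
  | zero => simpa [derivFactor] using hr
  | succ k ih =>
    simp only [derivFactor, LinearMap.comp_apply, LinearMap.add_apply, LinearMap.mulLeft_apply]
    set q := derivFactor f e k r
    have key : ∀ u v : (ZMod p)[X], u.degree ≤ m → v.degree < (d + k * m : ℕ) →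
        (u * v).degree < (d + (k + 1) * m : ℕ) := by
      intro u v hu hv
      rcases eq_or_ne v 0 with rfl | hv0
      · rw [mul_zero, degree_zero]
        exact WithBot.bot_lt_coe _
      rcases eq_or_ne u 0 with rfl | hu0
      · rw [zero_mul, degree_zero]
        exact WithBot.bot_lt_coe _
      rw [degree_mul, degree_eq_natDegree hu0, degree_eq_natDegree hv0] at *
      norm_cast at *
      nlinarith
    have hfd : f.degree ≤ m := natDegree_le_iff_degree_le.mp hf
    refine lt_of_le_of_lt (degree_add_le _ _) (max_lt (key _ _ ?_ ih) (key _ _ hfd ?_))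
    · refine le_trans ?_ (degree_derivative_le.trans hfd)
      rw [← nsmul_eq_mul]
      exact degree_smul_le _ _
    · exact lt_of_le_of_lt degree_derivative_le ih

/-! ### Nonvanishing of the auxiliary polynomial -/

/-- For `f` with nonzero constant term and a simple root, `f`, `f ^ ((p-1)/2)` and `X ^ p` satisfy
no relation with coefficients of low degree: the lowest `X ^ p`-adic layer of such a relation, squared and multiplied
by `f`, exhibits `f` as a constant times a square. -/
lemma layer_eq_zero (h : ℕ) (hp : p = 2 * h + 1) (f : (ZMod p)[X]) (b : ZMod p)
    (hb : f.rootMultiplicity b = 1) (hf0 : f.eval 0 ≠ 0) (d : ℕ) (hd : 2 * d + f.natDegree ≤ p)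
    (r s U V : (ZMod p)[X]) (hr : r.degree < d) (hs : s.degree < d)
    (hrel : r + X ^ p * U + f ^ h * (s + X ^ p * V) = 0) : r = 0 ∧ s = 0 := by
  have hfne : f ≠ 0 := by rintro rfl; simp at hf0
  have hexp : X ^ p ∣ f ^ p - C (f.eval 0) := by
    have h1 : X ∣ f - C (f.eval 0) := by
      rw [← sub_zero (X : (ZMod p)[X]), ← C_0]; exact X_sub_C_dvd_sub_C_eval
    have h2 := pow_dvd_pow_of_dvd h1 p
    rwa [sub_pow_char, ← C_pow, ZMod.pow_card] at h2
  obtain ⟨W, hW⟩ := hexp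
  have hdvd : X ^ p ∣ f * r ^ 2 - C (f.eval 0) * s ^ 2 := by
    have e1 : f * (r + X ^ p * U) ^ 2 = f ^ p * (s + X ^ p * V) ^ 2 := by
      have : r + X ^ p * U = - (f ^ h * (s + X ^ p * V)) := by linear_combination hrel
      rw [this]
      have : f ^ p = f ^ (2 * h + 1) := by rw [← hp]
      rw [this]; ring
    have e2 : f ^ p = C (f.eval 0) + X ^ p * W := by linear_combination hW
    rw [e2] at e1
    refine ⟨- f * (2 * r * U + X ^ p * U ^ 2) + W * (s + X ^ p * V) ^ 2 +
      C (f.eval 0) * (2 * s * V + X ^ p * V ^ 2), ?_⟩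
    linear_combination e1
  have hlt : (f * r ^ 2 - C (f.eval 0) * s ^ 2).degree < (X ^ p : (ZMod p)[X]).degree := by
    rw [degree_X_pow]
    refine lt_of_le_of_lt (degree_sub_le _ _) (max_lt ?_ ?_)
    · rcases eq_or_ne r 0 with rfl | h0
      · simp
      rw [degree_mul, degree_pow, degree_eq_natDegree h0, degree_eq_natDegree hfne,
        nsmul_eq_mul] at *
      norm_cast at *
      omega
    · rcases eq_or_ne s 0 with rfl | h0
      · simp
      rw [degree_mul, degree_pow, degree_C hf0, degree_eq_natDegree h0, nsmul_eq_mul] at *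
      norm_cast at *
      omega
  have hz := eq_zero_of_dvd_of_degree_lt hdvd hlt
  have heq : f * r ^ 2 = C (f.eval 0) * s ^ 2 := sub_eq_zero.mp hz
  have hC : C (f.eval 0) ≠ 0 := C_ne_zero.mpr hf0
  by_cases h0 : r = 0
  · refine ⟨h0, ?_⟩
    rw [h0] at heq
    have : C (f.eval 0) * s ^ 2 = 0 := by rw [← heq]; simp
    simpa [hf0] using this
  · exfalso
    have hs0 : s ≠ 0 := by
      rintro rfl
      have : f * r ^ 2 = 0 := by rw [heq]; simp
      simp [hfne, h0] at this
    have h1 := congrArg (rootMultiplicity b) heq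
    rw [sq, sq, rootMultiplicity_mul (mul_ne_zero hfne (mul_ne_zero h0 h0)),
      rootMultiplicity_mul (mul_ne_zero hC (mul_ne_zero hs0 hs0)),
      rootMultiplicity_mul (mul_ne_zero h0 h0),
      rootMultiplicity_mul (mul_ne_zero hs0 hs0), hb, rootMultiplicity_C] at h1
    omega

/-- Linear independence of the products `X ^ (j * p)`, `f ^ h * X ^ (j * p)` over polynomials of
degree `< d`, peeling off one layer at a time. -/
lemma relation_trivial (h : ℕ) (hp : p = 2 * h + 1) (f : (ZMod p)[X]) (b : ZMod p)
    (hb : f.rootMultiplicity b = 1) (hf0 : f.eval 0 ≠ 0) (d : ℕ) (hd : 2 * d + f.natDegree ≤ p)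
    (J : ℕ) (r s : Fin J → (ZMod p)[X]) (hr : ∀ j, (r j).degree < d) (hs : ∀ j, (s j).degree < d)
    (hrel : ∑ j : Fin J, (r j + f ^ h * s j) * X ^ ((j : ℕ) * p) = 0) :
    ∀ j, r j = 0 ∧ s j = 0 := by
  induction J with
  | zero => intro j; exact j.elim0
  | succ J ih =>
    set U := ∑ j : Fin J, r j.succ * X ^ ((j : ℕ) * p)
    set V := ∑ j : Fin J, s j.succ * X ^ ((j : ℕ) * p)
    have hUV : ∑ j : Fin J, (r j.succ + f ^ h * s j.succ) * X ^ ((j : ℕ) * p) = U + f ^ h * V := by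
      simp only [U, V, Finset.mul_sum, ← Finset.sum_add_distrib]
      exact Finset.sum_congr rfl fun j _ => by ring
    have hrel' : r 0 + f ^ h * s 0 + X ^ p * (U + f ^ h * V) = 0 := by
      rw [← hUV, Finset.mul_sum, ← hrel, Fin.sum_univ_succ]
      simp only [Fin.val_zero, zero_mul, pow_zero, mul_one, Fin.val_succ, add_mul, one_mul,
        pow_add]
      congr 1
      exact Finset.sum_congr rfl fun j _ => by ring
    have h0 := layer_eq_zero h hp f b hb hf0 d hd (r 0) (s 0) U V (hr 0) (hs 0)
      (by linear_combination hrel')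
    rw [h0.1, h0.2] at hrel'
    have h1 : U + f ^ h * V = 0 := by simpa using hrel'
    have := ih (fun j => r j.succ) (fun j => s j.succ) (fun j => hr _) (fun j => hs _)
      (hUV.trans h1)
    intro j
    refine Fin.cases h0 this j

/-! ### Choice of the coefficients and the point count -/

/-- Counting unknowns against equations: nontrivial coefficients `r j`, `s j` exist whose
associated polynomials, which represent `P^(k) / f ^ (l - k)` at the points where `f ^ h = a`,
vanish for all orders `k < l`. -/
lemma exists_coeffs (f : (ZMod p)[X]) (m : ℕ) (hm : f.natDegree ≤ m) (a : ZMod p)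
    (e₁ e₂ l J d : ℕ) (hdim : l * (d + l * m + J) < J * (d + d)) :
    ∃ r s : Fin J → (ZMod p)[X], (∀ j, (r j).degree < d) ∧ (∀ j, (s j).degree < d) ∧
      (∃ j, r j ≠ 0 ∨ s j ≠ 0) ∧ ∀ k < l,
        ∑ j : Fin J, (derivFactor f e₁ k (r j) + C a * derivFactor f e₂ k (s j)) * X ^ (j : ℕ)
          = 0 := by
  set M := d + l * m + J
  let D := Fin J → (degreeLT (ZMod p) d × degreeLT (ZMod p) d)
  let Ψ : ℕ → D →ₗ[ZMod p] (ZMod p)[X] := fun k => ∑ j : Fin J,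
    LinearMap.mulLeft (ZMod p) (X ^ (j : ℕ)) ∘ₗ
      (derivFactor f e₁ k ∘ₗ (degreeLT (ZMod p) d).subtype ∘ₗ LinearMap.fst _ _ _ +
        LinearMap.mulLeft (ZMod p) (C a) ∘ₗ derivFactor f e₂ k ∘ₗ
          (degreeLT (ZMod p) d).subtype ∘ₗ LinearMap.snd _ _ _) ∘ₗ LinearMap.proj j
  have hΨ : ∀ k (v : D), Ψ k v = ∑ j : Fin J, (derivFactor f e₁ k (v j).1 +
      C a * derivFactor f e₂ k (v j).2) * X ^ (j : ℕ) := by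
    intro k v
    simp only [Ψ, LinearMap.sum_apply, LinearMap.comp_apply, LinearMap.add_apply,
      LinearMap.mulLeft_apply, LinearMap.fst_apply, LinearMap.snd_apply,
      Submodule.subtype_apply]
    exact Finset.sum_congr rfl fun j _ => mul_comm _ _
  let Φ : D →ₗ[ZMod p] (Fin l × Fin M → ZMod p) :=
    LinearMap.pi fun i => lcoeff (ZMod p) i.2 ∘ₗ Ψ i.1
  have : Module.Finite (ZMod p) (degreeLT (ZMod p) d) :=
    Module.Finite.equiv (degreeLTEquiv (ZMod p) d).symm
  have hfr : Module.finrank (ZMod p) (degreeLT (ZMod p) d) = d := by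
    rw [(degreeLTEquiv (ZMod p) d).finrank_eq]; simp
  have hker : LinearMap.ker Φ ≠ ⊥ := by
    apply LinearMap.ker_ne_bot_of_finrank_lt
    simp only [D, Module.finrank_pi_fintype, Module.finrank_prod, hfr]
    simpa using hdim
  obtain ⟨v, hv, hv0⟩ := (Submodule.ne_bot_iff _).mp hker
  refine ⟨fun j => (v j).1, fun j => (v j).2, fun j => mem_degreeLT.mp (v j).1.2,
    fun j => mem_degreeLT.mp (v j).2.2, ?_, ?_⟩
  · by_contra! hall
    refine hv0 (funext fun j => Prod.ext (Subtype.ext ?_) (Subtype.ext ?_))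
    · exact (hall j).1
    · exact (hall j).2
  · intro k hk
    rw [← hΨ]
    ext n
    by_cases hn : n < M
    · have := congrFun (LinearMap.mem_ker.mp hv) (⟨k, hk⟩, ⟨n, hn⟩)
      simpa [Φ] using this
    · rw [coeff_zero]
      apply coeff_eq_zero_of_degree_lt
      refine lt_of_lt_of_le ?_ (Nat.cast_le.mpr (not_lt.mp hn))
      rw [hΨ]
      refine lt_of_le_of_lt (degree_sum_le _ _) ?_
      rw [Finset.sup_lt_iff (WithBot.bot_lt_coe _)]
      intro j _
      have h1 := derivFactor_degree f m hm e₁ _ d (mem_degreeLT.mp (v j).1.2) k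
      have h2 := derivFactor_degree f m hm e₂ _ d (mem_degreeLT.mp (v j).2.2) k
      have h2' : (C a * derivFactor f e₂ k (v j).2 : (ZMod p)[X]).degree < (d + k * m : ℕ) := by
        rw [← smul_eq_C_mul]
        exact lt_of_le_of_lt (degree_smul_le _ _) h2
      have h3 := lt_of_le_of_lt (degree_add_le _ _) (max_lt h1 h2')
      set w := derivFactor f e₁ k (v j).1 + C a * derivFactor f e₂ k (v j).2
      rcases eq_or_ne w 0 with hw | hw
      · simp [hw]
      rw [degree_mul, degree_X_pow, degree_eq_natDegree hw] at *
      norm_cast at *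
      have : k * m ≤ l * m := Nat.mul_le_mul_right _ hk.le
      have := j.2
      omega

lemma card_mul_le_natDegree (P : (ZMod p)[X]) (l : ℕ) (Z : Finset (ZMod p))
    (h : ∀ x ∈ Z, l ≤ P.rootMultiplicity x) : Z.card * l ≤ P.natDegree := by
  calc Z.card * l = ∑ x ∈ Z, l := by simp
    _ ≤ ∑ x ∈ Z, P.roots.count x := Finset.sum_le_sum fun x hx => by simpa using h x hx
    _ ≤ ∑ x : ZMod p, P.roots.count x :=
        Finset.sum_le_sum_of_subset_of_nonneg (Finset.subset_univ _) (by simp)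
    _ = P.roots.card := Multiset.sum_count_eq_card (by simp)
    _ ≤ P.natDegree := card_roots' P

/-- Stepanov's count with free parameters: `l` is the order of vanishing, `J` the number of
layers, and `d` bounds the degree of the coefficients. -/
lemma stepanov_count (h : ℕ) (hp : p = 2 * h + 1) (f : (ZMod p)[X]) (b : ZMod p)
    (hb : f.rootMultiplicity b = 1) (hf0 : f.eval 0 ≠ 0) (m : ℕ) (hm : f.natDegree = m)
    (a : ZMod p) (l J d : ℕ) (hd : 2 * d + m ≤ p) (hl : l ≤ p)
    (hdim : l * (d + l * m + J) < J * (d + d)) :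
    (Finset.univ.filter fun x : ZMod p => f.eval x ^ h = a).card * l ≤
      l * m + d + h * m + J * p := by
  obtain ⟨r, s, hr, hs, ⟨j₀, hj₀⟩, hv⟩ := exists_coeffs f m hm.le a l (l + h) l J d hdim
  have hfne : f ≠ 0 := by rintro rfl; simp at hf0
  set P : (ZMod p)[X] := ∑ j : Fin J,
    (f ^ l * r j * X ^ ((j : ℕ) * p) + f ^ (l + h) * s j * X ^ ((j : ℕ) * p)) with hPdef
  have hPfac : P = f ^ l * ∑ j : Fin J, (r j + f ^ h * s j) * X ^ ((j : ℕ) * p) := by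
    rw [hPdef, Finset.mul_sum]
    exact Finset.sum_congr rfl fun j _ => by ring
  have hP : P ≠ 0 := by
    intro h0
    rw [hPfac] at h0
    have h1 := (mul_eq_zero.mp h0).resolve_left (pow_ne_zero _ hfne)
    have := relation_trivial h hp f b hb hf0 d (hm ▸ hd) J r s hr hs h1 j₀
    tauto
  have hdeg : P.natDegree ≤ l * m + d + h * m + J * p := by
    refine natDegree_sum_le_of_forall_le _ _ fun j _ => ?_
    have hrj : (r j).natDegree ≤ d := natDegree_le_of_degree_le (hr j).le
    have hsj : (s j).natDegree ≤ d := natDegree_le_of_degree_le (hs j).le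
    have hj : (j : ℕ) * p ≤ J * p := Nat.mul_le_mul_right _ j.2.le
    refine (natDegree_add_le _ _).trans (max_le ?_ ?_)
    · refine natDegree_mul_le.trans ?_
      rw [natDegree_X_pow]
      have := natDegree_mul_le (p := f ^ l) (q := r j)
      rw [natDegree_pow, hm] at this
      have : 0 ≤ h * m := Nat.zero_le _
      omega
    · refine natDegree_mul_le.trans ?_
      rw [natDegree_X_pow]
      have := natDegree_mul_le (p := f ^ (l + h)) (q := s j)
      rw [natDegree_pow, hm, add_mul] at this
      omega
  refine (card_mul_le_natDegree P l _ ?_).trans hdeg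
  intro x hx
  rw [Finset.mem_filter] at hx
  rcases l with _ | l
  · exact Nat.zero_le _
  refine lt_rootMultiplicity_of_isRoot_iterate_derivative_of_mem_nonZeroDivisors hP ?_ ?_
  · intro k hk
    have hk1 : k ≤ l + 1 := by omega
    have hev := congrArg (eval x) (hv k (by omega))
    rw [IsRoot.def, hPdef, iterate_derivative_sum, eval_finsetSum]
    rw [eval_finsetSum, eval_zero] at hev
    have : (0 : ZMod p) = eval x f ^ (l + 1 - k) * 0 := by simp
    rw [this, ← hev, Finset.mul_sum]
    refine Finset.sum_congr rfl fun j _ => ?_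
    have hsub : l + 1 + h - k = l + 1 - k + h := by omega
    rw [iterate_map_add, iterate_derivative_eq _ _ _ _ _ hk1,
      iterate_derivative_eq _ _ _ _ _ (by omega), hsub]
    simp only [eval_add, eval_mul, eval_pow, eval_X, eval_C, pow_mul', ZMod.pow_card]
    rw [pow_add, hx.2]
    ring
  · rw [mem_nonZeroDivisors_iff_ne_zero]
    intro h0
    rw [ZMod.natCast_eq_zero_iff, (Fact.out : p.Prime).dvd_factorial] at h0
    omega

/-! ### Weil's bound for split squarefree polynomials -/

/-- The one-sided bound that Stepanov's method gives directly: `f ^ h`, with `h = (p-1)/2`,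
takes a given value at most `p / 2 + O(m √p)` times. The auxiliary polynomial has vanishing order
`2 ⌊√p⌋` and `⌊√p⌋ + 16 m + 9` layers. -/
lemma card_pow_eq_le (h : ℕ) (hp : p = 2 * h + 1) (f : (ZMod p)[X]) (b : ZMod p)
    (hb : f.rootMultiplicity b = 1) (hf0 : f.eval 0 ≠ 0) (m : ℕ) (hm : f.natDegree = m)
    (a : ZMod p) (h64 : 64 ≤ p) (hpm : 2 * m + 2 ≤ p) :
    2 * ((Finset.univ.filter fun x : ZMod p => f.eval x ^ h = a).card : ℝ) ≤
      p + 2 * m + (34 * m + 20) * √p := by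
  set n := Nat.sqrt p with hn
  have hn1 : n * n ≤ p := Nat.sqrt_le p
  have hn2 : p < (n + 1) * (n + 1) := Nat.lt_succ_sqrt p
  have hn8 : 8 ≤ n := Nat.le_sqrt.mpr h64
  set d := (p - m) / 2 with hd
  have hd4 : p ≤ 4 * d := by omega
  have key := stepanov_count h hp f b hb hf0 m hm a (2 * n) (n + (16 * m + 9)) d (by omega)
    (by nlinarith) (by
      have h1 : 8 * n ≤ p := by nlinarith
      nlinarith [Nat.mul_le_mul_left m hn1, Nat.mul_le_mul_left m hd4, Nat.mul_le_mul_left m h1])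
  set N := (Finset.univ.filter fun x : ZMod p => f.eval x ^ h = a).card
  have key2 : N * (2 * n) ≤ n * p + 2 * n * m + p * (17 * m + 10) := by
    have : d ≤ p := by omega
    have : h * m ≤ p * m := Nat.mul_le_mul_right _ (by omega)
    nlinarith
  have key3 : (N : ℝ) * (2 * n) ≤ n * p + 2 * n * m + p * (17 * m + 10) := by exact_mod_cast key2
  have hn0 : (0 : ℝ) < n := by exact_mod_cast (by omega : 0 < n)
  have hsq : √(p : ℝ) * √p = p := Real.mul_self_sqrt (by positivity)
  have hs2 : √(p : ℝ) ≤ 2 * n := by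
    rw [Real.sqrt_le_left (by positivity)]
    have : p ≤ (2 * n) ^ 2 := by nlinarith
    exact_mod_cast this
  have hp2 : (p : ℝ) ≤ 2 * n * √p := by nlinarith [Real.sqrt_nonneg (p : ℝ)]
  have : (p : ℝ) * (17 * m + 10) ≤ 2 * n * √p * (17 * m + 10) :=
    mul_le_mul_of_nonneg_right hp2 (by positivity)
  refine le_of_mul_le_mul_left ?_ hn0
  nlinarith

/-- Weil's bound for `∑ₓ χ(∏_{t ∈ T} (x - t))` when `0 ∉ T` and `p` is not small. -/
lemma charSum_bound_aux (hp : Odd p) (T : Finset (ZMod p)) (hT : T.Nonempty) (h0 : 0 ∉ T)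
    (h64 : 64 ≤ p) (hpm : 2 * T.card + 2 ≤ p) :
    |((∑ x : ZMod p, quadraticChar (ZMod p) (∏ t ∈ T, (x - t)) : ℤ) : ℝ)| ≤
      (37 * T.card + 20) * √p := by
  obtain ⟨h, hph⟩ := hp
  set m := T.card with hmdef
  set f : (ZMod p)[X] := ∏ t ∈ T, (X - C t) with hf
  obtain ⟨b, hbT⟩ := hT
  have hroots : f.roots = T.val := roots_prod_X_sub_C T
  have hb : f.rootMultiplicity b = 1 := by
    rw [← count_roots, hroots]
    exact Multiset.count_eq_one_of_mem T.nodup hbT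
  have heval : ∀ x, f.eval x = ∏ t ∈ T, (x - t) := by
    intro x; simp [hf, eval_prod]
  have hf0 : f.eval 0 ≠ 0 := by
    rw [heval, Finset.prod_ne_zero_iff]
    intro t ht
    rw [zero_sub, neg_ne_zero]
    rintro rfl
    exact h0 ht
  have hm : f.natDegree = m := by
    rw [hf, natDegree_prod_of_monic _ _ (fun t _ => monic_X_sub_C t)]
    simp [hmdef]
  have hchar : ringChar (ZMod p) ≠ 2 := by
    rw [ZMod.ringChar_zmod_n]; omega
  set χ := quadraticChar (ZMod p)
  have hpow : ∀ y : ZMod p, ((χ y : ℤ) : ZMod p) = y ^ h := by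
    intro y
    rw [quadraticChar_eq_pow_of_char_ne_two' hchar, ZMod.card]
    congr 1; omega
  set A := Finset.univ.filter fun x : ZMod p => χ (f.eval x) = 1
  set B := Finset.univ.filter fun x : ZMod p => χ (f.eval x) = -1
  set Z := Finset.univ.filter fun x : ZMod p => f.eval x = 0
  have hA : (A.card : ℝ) ≤ (Finset.univ.filter fun x : ZMod p => f.eval x ^ h = 1).card := by
    refine Nat.cast_le.mpr (Finset.card_le_card fun x hx => ?_)
    simp only [A, Finset.mem_filter, Finset.mem_univ, true_and] at hx ⊢
    rw [← hpow, hx]; simp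
  have hB : (B.card : ℝ) ≤ (Finset.univ.filter fun x : ZMod p => f.eval x ^ h = -1).card := by
    refine Nat.cast_le.mpr (Finset.card_le_card fun x hx => ?_)
    simp only [B, Finset.mem_filter, Finset.mem_univ, true_and] at hx ⊢
    rw [← hpow, hx]; simp
  have hZ : (Z.card : ℝ) ≤ m := by
    refine Nat.cast_le.mpr (Finset.card_le_card fun x hx => ?_)
    simp only [Z, Finset.mem_filter, Finset.mem_univ, true_and, heval,
      Finset.prod_eq_zero_iff] at hx
    obtain ⟨t, ht, hxt⟩ := hx
    rwa [sub_eq_zero.mp hxt]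
  -- pointwise form of `∑ χ(f) = |A| - |B|` and `p = |A| + |B| + |Z|`
  have hpt : ∀ x : ZMod p, (χ (f.eval x) : ℤ) =
      (if χ (f.eval x) = 1 then 1 else 0) - (if χ (f.eval x) = -1 then 1 else 0) ∧
      (1 : ℤ) = (if χ (f.eval x) = 1 then 1 else 0) + (if χ (f.eval x) = -1 then 1 else 0) +
        (if f.eval x = 0 then 1 else 0) := by
    intro x
    by_cases hx : f.eval x = 0
    · have : χ 0 = 0 := quadraticChar_zero
      simp [hx, this]
    · rcases quadraticChar_dichotomy hx with h1 | h1 <;> simp [χ, h1, hx]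
  have hS : (∑ x : ZMod p, χ (f.eval x) : ℤ) = A.card - B.card := by
    rw [Finset.sum_congr rfl fun x _ => (hpt x).1, Finset.sum_sub_distrib]
    simp [A, B]
  have htot : (p : ℤ) = A.card + B.card + Z.card := by
    have : (p : ℤ) = ∑ x : ZMod p, 1 := by simp
    rw [this, Finset.sum_congr rfl fun x _ => (hpt x).2, Finset.sum_add_distrib,
      Finset.sum_add_distrib]
    simp [A, B, Z]
  have htot' : (p : ℝ) = A.card + B.card + Z.card := by exact_mod_cast htot
  have b1 := card_pow_eq_le h hph f b hb hf0 m hm 1 h64 hpm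
  have b2 := card_pow_eq_le h hph f b hb hf0 m hm (-1) h64 hpm
  rw [← Finset.sum_congr rfl fun x _ => congrArg χ (heval x), hS]
  push_cast
  have hs1 : 1 ≤ √(p : ℝ) := by
    rw [Real.one_le_sqrt]; exact_mod_cast (Fact.out : p.Prime).one_le
  have : (m : ℝ) ≤ m * √p := le_mul_of_one_le_right (Nat.cast_nonneg _) hs1
  rw [abs_le]
  constructor <;> linarith

/-- Weil's bound for `∑ₓ χ(∏_{t ∈ T} (x - t))`, `T` nonempty; for small `p` it is weaker than
the trivial bound `p`. -/
lemma charSum_bound (hp : Odd p) (T : Finset (ZMod p)) (hT : T.Nonempty) :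
    |((∑ x : ZMod p, quadraticChar (ZMod p) (∏ t ∈ T, (x - t)) : ℤ) : ℝ)| ≤
      (37 * T.card + 20) * √p := by
  have hsq : √(p : ℝ) * √p = p := Real.mul_self_sqrt (by positivity)
  by_cases hbig : 64 ≤ p ∧ 2 * T.card + 2 ≤ p
  · -- translate `T` away from `0`
    obtain ⟨c, hc⟩ : ∃ c, c ∉ T := by
      by_contra! hall
      have := Finset.card_le_card (fun x _ => hall x : Finset.univ ⊆ T)
      rw [Finset.card_univ, ZMod.card] at this
      omega
    have hcard : (T.image (· - c)).card = T.card :=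
      Finset.card_image_of_injective _ (sub_left_injective)
    have := charSum_bound_aux hp (T.image (· - c)) (hT.image _)
      (by simpa [sub_eq_zero] using hc) hbig.1 (by rw [hcard]; exact hbig.2)
    rw [hcard] at this
    convert this using 3
    rw [← Equiv.sum_comp (Equiv.addRight c)]
    refine Finset.sum_congr rfl fun x _ => ?_
    rw [Finset.prod_image (fun _ _ _ _ h => sub_left_injective h)]
    congr 1
    refine Finset.prod_congr rfl fun t _ => ?_
    simp only [Equiv.coe_addRight]
    ring
  · have htriv : |((∑ x : ZMod p, quadraticChar (ZMod p) (∏ t ∈ T, (x - t)) : ℤ) : ℝ)| ≤ p := by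
      have : |(∑ x : ZMod p, quadraticChar (ZMod p) (∏ t ∈ T, (x - t)) : ℤ)| ≤ p := by
        refine (Finset.abs_sum_le_sum_abs _ _).trans ?_
        calc _ ≤ ∑ x : ZMod p, (1 : ℤ) := Finset.sum_le_sum fun x _ => by
              rcases quadraticChar_isQuadratic (ZMod p) (∏ t ∈ T, (x - t)) with h | h | h <;>
                simp [h]
          _ = p := by simp
      exact_mod_cast this
    refine htriv.trans ?_
    have hle : √(p : ℝ) ≤ 37 * T.card + 20 := by
      rw [not_and_or] at hbig
      rcases hbig with h | h
      · rw [Real.sqrt_le_left (by positivity)]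
        have : (p : ℝ) ≤ 64 := by exact_mod_cast (by omega : p ≤ 64)
        nlinarith [(Nat.cast_nonneg T.card : (0 : ℝ) ≤ T.card)]
      · have h1 : √(p : ℝ) ≤ p := by
          rw [Real.sqrt_le_left (by positivity)]
          have : (1 : ℝ) ≤ p := by exact_mod_cast (Fact.out : p.Prime).one_le
          nlinarith
        have : (p : ℝ) ≤ 2 * T.card + 2 := by exact_mod_cast (by omega : p ≤ 2 * T.card + 2)
        nlinarith [(Nat.cast_nonneg T.card : (0 : ℝ) ≤ T.card)]
    calc (p : ℝ) = √p * √p := hsq.symm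
      _ ≤ _ := mul_le_mul_of_nonneg_right hle (Real.sqrt_nonneg _)

end Stepanov

/-! ### From character sums to counting squares -/

namespace Stepanov

open Finset

variable {p : ℕ} [Fact p.Prime]

/-- The number of `x` with all `x - b`, `b ∈ B`, squares is `p / 2 ^ |B| + O(√p)`. The `x ∈ B`
have to be treated apart because `0` is a square with `χ 0 = 0`. -/
lemma count_squares_bound (hp : Odd p) (B : Finset (ZMod p)) :
    |(2 : ℝ) ^ B.card * ((univ.filter fun x : ZMod p => ∀ b ∈ B, IsSquare (x - b)).card : ℝ) - p|
      ≤ 2 ^ B.card * (38 * B.card + 20) * √p := by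
  set s := B.card with hs
  set χ := quadraticChar (ZMod p)
  set G : ZMod p → ℤ := fun x => ∏ b ∈ B, (1 + χ (x - b))
  set I : ZMod p → ℤ := fun x => if ∀ b ∈ B, IsSquare (x - b) then 1 else 0
  have hI : ((univ.filter fun x : ZMod p => ∀ b ∈ B, IsSquare (x - b)).card : ℤ) = ∑ x, I x := by
    simp [I]
  have hfac : ∀ y : ZMod p, 0 ≤ 1 + χ y ∧ 1 + χ y ≤ 2 := by
    intro y
    rcases quadraticChar_isQuadratic (ZMod p) y with h | h | h <;> simp [χ, h]
  have hGI : ∀ x, |2 ^ s * I x - G x| ≤ if x ∈ B then 2 ^ s else 0 := by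
    intro x
    split_ifs with hx
    · have h1 : 0 ≤ G x := prod_nonneg fun b _ => (hfac _).1
      have h2 : G x ≤ 2 ^ s := by
        rw [hs, ← prod_const]
        exact prod_le_prod (fun b _ => (hfac _).1) fun b _ => (hfac _).2
      have h3 : I x = 0 ∨ I x = 1 := by
        simp only [I]; split_ifs <;> simp
      rw [abs_le]
      rcases h3 with h | h <;> rw [h] <;> constructor <;> linarith
    · have hne : ∀ b ∈ B, x - b ≠ 0 := by
        intro b hb h
        rw [sub_eq_zero] at h
        exact hx (h ▸ hb)
      rw [abs_nonpos_iff, sub_eq_zero]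
      by_cases hall : ∀ b ∈ B, IsSquare (x - b)
      · simp only [I, G, if_pos hall, mul_one]
        rw [hs, ← prod_const]
        refine prod_congr rfl fun b hb => ?_
        rw [(quadraticChar_one_iff_isSquare (hne b hb)).mpr (hall b hb)]
        rfl
      · simp only [I, G, if_neg hall, mul_zero]
        push Not at hall
        obtain ⟨b, hb, hsq⟩ := hall
        refine (prod_eq_zero hb ?_).symm
        rw [quadraticChar_neg_one_iff_not_isSquare.mpr hsq]
        rfl
  have hsum1 : |2 ^ s * ∑ x, I x - ∑ x, G x| ≤ 2 ^ s * s := by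
    rw [mul_sum, ← sum_sub_distrib]
    refine (abs_sum_le_sum_abs _ _).trans ((sum_le_sum fun x _ => hGI x).trans ?_)
    simp [sum_ite_mem, hs, mul_comm]
  have hG : ∑ x, G x = ∑ T ∈ B.powerset, ∑ x, χ (∏ t ∈ T, (x - t)) := by
    simp only [G, prod_one_add, map_prod]
    exact sum_comm
  have hpI : (p : ℤ) = ∑ T ∈ B.powerset, if T = ∅ then (p : ℤ) else 0 := by
    simp
  have hs1 : 1 ≤ √(p : ℝ) := by
    rw [Real.one_le_sqrt]; exact_mod_cast (Fact.out : p.Prime).one_le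
  have hsum2 : |((∑ x, G x - p : ℤ) : ℝ)| ≤ 2 ^ s * ((37 * s + 20) * √p) := by
    rw [hG, hpI, ← sum_sub_distrib, Int.cast_sum]
    refine (abs_sum_le_sum_abs _ _).trans ?_
    have hcard : (2 : ℝ) ^ s = B.powerset.card := by simp [hs]
    rw [hcard, ← nsmul_eq_mul]
    refine sum_le_card_nsmul _ _ _ fun T hT => ?_
    have hTs : (T.card : ℝ) ≤ s := Nat.cast_le.mpr (card_le_card (mem_powerset.mp hT))
    split_ifs with h0
    · subst h0
      simp [χ]
      positivity
    · rw [sub_zero]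
      refine (charSum_bound hp T (nonempty_iff_ne_empty.mpr h0)).trans ?_
      exact mul_le_mul_of_nonneg_right (by linarith) (by positivity)
  have hsum1' : |((2 ^ s * ∑ x, I x - ∑ x, G x : ℤ) : ℝ)| ≤ 2 ^ s * s := by exact_mod_cast hsum1
  have hN : ((univ.filter fun x : ZMod p => ∀ b ∈ B, IsSquare (x - b)).card : ℝ) =
      ((∑ x, I x : ℤ) : ℝ) := by rw [← hI]; rfl
  rw [hN]
  have hsplit : (2 : ℝ) ^ s * ((∑ x, I x : ℤ) : ℝ) - p =
      ((2 ^ s * ∑ x, I x - ∑ x, G x : ℤ) : ℝ) + ((∑ x, G x - p : ℤ) : ℝ) := by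
    push_cast; ring
  rw [hsplit]
  refine (abs_add_le _ _).trans ((add_le_add hsum1' hsum2).trans ?_)
  have : (2 : ℝ) ^ s * s ≤ 2 ^ s * s * √p :=
    le_mul_of_one_le_right (mul_nonneg (by positivity) (Nat.cast_nonneg _)) hs1
  linarith

lemma bsum_succ (r : ℕ) (h : Fin (r - 1) → ZMod p) (i : Fin (r - 1)) (h1 : i.1 < r)
    (h2 : i.1 + 1 < r) : bsum r p h ⟨i.1 + 1, h2⟩ = bsum r p h ⟨i.1, h1⟩ + h i := by
  unfold bsum
  have : (univ.filter fun k : Fin (r - 1) => (k : ℕ) < i.1 + 1) =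
      insert i (univ.filter fun k : Fin (r - 1) => (k : ℕ) < i.1) := by
    ext k
    simp only [mem_filter, mem_univ, true_and, mem_insert, Fin.ext_iff]
    omega
  simp only [this]
  rw [sum_insert (by simp), add_comm]

/-- A tuple counted by `NrP` is determined by its first entry `x`, the others being
`x - bsum r p h j`. -/
lemma NrP_eq (r : ℕ) (hr : 2 ≤ r) (h : Fin (r - 1) → ZMod p) :
    NrP r p h =
      (univ.filter fun x : ZMod p => ∀ b ∈ image (bsum r p h) univ, IsSquare (x - b)).card := by
  have hr0 : 0 < r := by omega
  have hy : ∀ y : Fin r → ZMod p, (∀ i : Fin (r - 1),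
      y ⟨i.1, by have := i.2; omega⟩ - y ⟨i.1 + 1, by have := i.2; omega⟩ = h i) →
      ∀ j : Fin r, y j = y ⟨0, hr0⟩ - bsum r p h j := by
    intro y hy ⟨j, hj⟩
    induction j with
    | zero => simp [bsum]
    | succ j ih =>
      have e1 := ih (by omega)
      have e2 := hy ⟨j, by omega⟩
      have e3 := bsum_succ r h ⟨j, by omega⟩ (by simp; omega) hj
      simp only at e2 e3
      rw [e3]
      linear_combination e1 - e2
  rw [NrP, ← Fintype.card_subtype, ← Nat.card_eq_fintype_card]
  refine Nat.card_congr
    { toFun := fun y => ⟨y.1 ⟨0, hr0⟩, ?_⟩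
      invFun := fun x => ⟨fun j => x.1 - bsum r p h j, ?_, ?_⟩
      left_inv := ?_
      right_inv := ?_ }
  · intro b hb
    obtain ⟨j, -, rfl⟩ := mem_image.mp hb
    rw [← hy y.1 y.2.2 j]
    obtain ⟨z, hz⟩ := y.2.1 j
    exact ⟨z, by rw [← hz, sq]⟩
  · intro j
    obtain ⟨z, hz⟩ := x.2 _ (mem_image_of_mem _ (mem_univ j))
    exact ⟨z, by beta_reduce; rw [hz, sq]⟩
  · intro i
    have := i.2
    beta_reduce
    rw [bsum_succ r h i (by omega) (by omega)]
    ring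
  · intro y
    exact Subtype.ext (funext fun j => (hy y.1 y.2.2 j).symm)
  · intro x
    exact Subtype.ext (by simp [bsum])

end Stepanov

/-- Kurlberg–Rudnick, Proposition 1 (`propN(h,p)`): `N_r(h,p) = (p + a(h,p))/2^{r_eff}`
with `a(h,p) ≪_r p^{1/2}`, i.e. `|2^{r_eff(h)} N_r(h,p) - p| ≤ C_r √p`. -/
theorem statement5 (r : ℕ) (hr : 2 ≤ r) :
    ∃ C > 0, ∀ p : ℕ, p.Prime → Odd p → ∀ h : Fin (r - 1) → ZMod p,
      |(2 : ℝ) ^ reff r p h * (NrP r p h : ℝ) - (p : ℝ)| ≤ C * Real.sqrt p := by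
  refine ⟨2 ^ r * (38 * r + 20), by positivity, fun p hp hodd h => ?_⟩
  have : Fact p.Prime := ⟨hp⟩
  have hs : reff r p h ≤ r := Finset.card_image_le.trans (by simp)
  rw [Stepanov.NrP_eq r hr h]
  refine (Stepanov.count_squares_bound hodd (Finset.image (bsum r p h) Finset.univ)).trans ?_
  change (2 : ℝ) ^ reff r p h * (38 * (reff r p h : ℝ) + 20) * √p ≤ _
  have h1 : (2 : ℝ) ^ reff r p h ≤ 2 ^ r := pow_le_pow_right₀ (by norm_num) hs
  have h2 : (reff r p h : ℝ) ≤ r := Nat.cast_le.mpr hs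
  gcongr
end

section
/- Let p be an odd prime and r ≥ 2 an integer. Setting a(h,p) = 2^{r_eff(h)}·N_r(h,p) − p and Δ(h,p) = 2^{r − r_eff(h)}, one has Σ_{h ∈ (ℤ/pℤ)^{r−1}} a(h,p)·Δ(h,p) = (p+1)^r − Σ_G λ(G)·p^{|G|}, where the last sum runs over all set partitions G of {1,…,r} and |G| is the number of blocks of G. -/
/-!
The left side splits as `2 ^ r ∑_h N_r(h) - ∑_h p 2 ^ (r - r_eff(h))`, because `r_eff(h) ≤ r`.

A tuple `y : Fin r → ZMod p` is the same thing as its first entry together with the vector `h` of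
its successive differences, since `y j = y 0 - b_j(h)` (`diffEquiv`). Hence `∑_h N_r(h)` counts all
`r`-tuples of squares, and there are `(p + 1) / 2` squares, which gives `(p + 1) ^ r`. Moreover
`r_eff(h)` is the number of distinct entries of `y`, i.e. the number of blocks of the kernel
partition of `y`, so the second sum is `∑_y 2 ^ (r - |ker y|)`.

On the other side, `p ^ |G|` counts the tuples `y` with `G ≤ ker y`, so `∑_G λ(G) p ^ |G|` equals
`∑_y ∑_{G ≤ ker y} λ(G)`, and Möbius inversion gives `∑_{G ≤ K} λ(G) = 2 ^ (r - |K|)`.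
-/

open scoped Classical

/-- `a(h,p) = 2^{r_eff(h)} N_r(h,p) - p`. -/
noncomputable def aP (r p : ℕ) (h : Fin (r - 1) → ZMod p) : ℤ :=
  2 ^ reff r p h * (NrP r p h : ℤ) - (p : ℤ)

/-- `Δ(h,p) = 2^{r - r_eff(h)}`. -/
def deltaP (r p : ℕ) (h : Fin (r - 1) → ZMod p) : ℤ :=
  2 ^ (r - reff r p h)

/-- `λ(G) = ∑_{F ⪯ G} μ(F,G) 2^{r - |F|}`, where `|F|` is the number of blocks of `F`. -/
noncomputable def lamG (r : ℕ) (mu : Setoid (Fin r) → Setoid (Fin r) → ℤ)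
    (G : Setoid (Fin r)) : ℤ :=
  ∑ᶠ (F : Setoid (Fin r)) (_ : F ≤ G), mu F G * 2 ^ (r - Nat.card (Quotient F))

lemma bsum_zero (r p : ℕ) (hr : 0 < r) (h : Fin (r - 1) → ZMod p) :
    bsum r p h ⟨0, hr⟩ = 0 := by
  simp [bsum]

lemma bsum_succ (r p : ℕ) (h : Fin (r - 1) → ZMod p) (k : Fin (r - 1)) :
    bsum r p h ⟨k.1 + 1, by have := k.2; omega⟩ =
      bsum r p h ⟨k.1, by have := k.2; omega⟩ + h k := by
  unfold bsum
  have : (Finset.univ.filter (fun i : Fin (r - 1) => (i : ℕ) < k.1 + 1)) =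
      insert k (Finset.univ.filter (fun i : Fin (r - 1) => (i : ℕ) < k.1)) := by
    ext i
    simp only [Finset.mem_filter, Finset.mem_univ, true_and, Finset.mem_insert, Fin.ext_iff]
    omega
  simp only [this]
  rw [Finset.sum_insert (by simp), add_comm]

/-- The vector of successive differences `y_i - y_{i+1}` of a tuple `y`. -/
def diffs (r p : ℕ) (y : Fin r → ZMod p) (i : Fin (r - 1)) : ZMod p :=
  y ⟨i.1, by have := i.2; omega⟩ - y ⟨i.1 + 1, by have := i.2; omega⟩

lemma eq_sub_bsum_diffs (r p : ℕ) (hr : 0 < r) (y : Fin r → ZMod p) (j : Fin r) :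
    y j = y ⟨0, hr⟩ - bsum r p (diffs r p y) j := by
  obtain ⟨j, hj⟩ := j
  induction j with
  | zero => rw [bsum_zero, sub_zero]
  | succ k ih =>
    have hk : k < r - 1 := by omega
    have h1 := bsum_succ r p (diffs r p y) ⟨k, hk⟩
    have h2 := ih (by omega)
    simp only at h1
    rw [h1, ← sub_sub, ← h2]
    simp [diffs]

/-- A tuple corresponds to its first entry together with its successive differences. -/
def diffEquiv (r p : ℕ) (hr : 0 < r) :
    (Fin r → ZMod p) ≃ ZMod p × (Fin (r - 1) → ZMod p) where
  toFun y := (y ⟨0, hr⟩, diffs r p y)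
  invFun q j := q.1 - bsum r p q.2 j
  left_inv y := by
    funext j
    exact (eq_sub_bsum_diffs r p hr y j).symm
  right_inv q := by
    obtain ⟨t, h⟩ := q
    ext i
    · simp [bsum_zero]
    · simp [diffs, bsum_succ]

/-- Reflecting and translating do not change the number of distinct values, so `r_eff` of the
differences of `y` is the number of distinct entries of `y`. -/
lemma reff_diffs (r p : ℕ) (hr : 0 < r) (y : Fin r → ZMod p) :
    reff r p (diffs r p y) = Nat.card (Quotient (Setoid.ker y)) := by
  rw [Nat.card_congr (Setoid.quotientKerEquivRange y), Nat.card_coe_set_eq]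
  unfold reff
  have h1 : Finset.image y Finset.univ =
      (Finset.image (bsum r p (diffs r p y)) Finset.univ).image (fun t => y ⟨0, hr⟩ - t) := by
    rw [Finset.image_image]
    congr 1
    funext j
    exact eq_sub_bsum_diffs r p hr y j
  have h2 : Set.range y = ((Finset.image y Finset.univ : Finset (ZMod p)) : Set (ZMod p)) := by
    simp
  rw [h2, Set.ncard_coe_finset, h1, Finset.card_image_of_injective _ sub_right_injective]

lemma reff_le (r p : ℕ) (h : Fin (r - 1) → ZMod p) : reff r p h ≤ r := by
  simpa [reff] using Finset.card_image_le (s := Finset.univ) (f := bsum r p h)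

/-- Twice the number of squares modulo an odd prime `p` is `p + 1`: for every `x`, twice the
indicator of being a square is `1 + χ(x) + [x = 0]`, with `χ` the quadratic character. -/
lemma two_mul_card_squares (p : ℕ) [Fact p.Prime] (hodd : Odd p) :
    2 * (Nat.card {x : ZMod p // ∃ z : ZMod p, z ^ 2 = x} : ℤ) = p + 1 := by
  have hchar : ringChar (ZMod p) ≠ 2 := by
    rw [ZMod.ringChar_zmod_n]
    rintro rfl
    exact absurd hodd (by decide)
  have key : ∀ x : ZMod p, (2 : ℤ) * (if ∃ z : ZMod p, z ^ 2 = x then 1 else 0) =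
      1 + quadraticChar (ZMod p) x + (if x = 0 then 1 else 0) := by
    intro x
    have hsq : (∃ z : ZMod p, z ^ 2 = x) ↔ IsSquare x := by
      rw [isSquare_iff_exists_sq]
      simp only [eq_comm]
    by_cases hx : x = 0
    · subst hx
      simp
    · rw [if_neg hx]
      by_cases h : IsSquare x
      · rw [if_pos (hsq.2 h), (quadraticChar_one_iff_isSquare hx).2 h]; norm_num
      · rw [if_neg (mt hsq.1 h), quadraticChar_neg_one_iff_not_isSquare.2 h]; norm_num
  rw [Nat.card_eq_fintype_card, Fintype.card_subtype, Finset.card_filter]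
  push_cast
  rw [Finset.mul_sum, Finset.sum_congr rfl (fun x _ => key x), Finset.sum_add_distrib,
    Finset.sum_add_distrib, quadraticChar_sum_zero hchar]
  simp

lemma sum_NrP (r p : ℕ) [NeZero p] :
    ∑ h : Fin (r - 1) → ZMod p, NrP r p h =
      Nat.card {x : ZMod p // ∃ z : ZMod p, z ^ 2 = x} ^ r := by
  have h1 : Nat.card {y : Fin r → ZMod p // ∀ i, ∃ z : ZMod p, z ^ 2 = y i} =
      Nat.card {x : ZMod p // ∃ z : ZMod p, z ^ 2 = x} ^ r := by
    rw [Nat.card_congr (Equiv.subtypePiEquivPi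
      (p := fun (_ : Fin r) (x : ZMod p) => ∃ z : ZMod p, z ^ 2 = x)), Nat.card_pi]
    simp
  rw [← h1, Nat.card_eq_fintype_card, Fintype.card_subtype,
    Finset.card_eq_sum_card_fiberwise (f := diffs r p) (t := Finset.univ) (by simp)]
  refine Finset.sum_congr rfl fun h _ => ?_
  rw [NrP, Nat.card_eq_fintype_card, Fintype.card_subtype, Finset.filter_filter]
  congr 1
  ext y
  simp [funext_iff, diffs]

/-- Every `h` is the vector of differences of exactly `p` tuples. -/
lemma sum_diffs (r p : ℕ) [NeZero p] (hr : 0 < r) (f : (Fin (r - 1) → ZMod p) → ℤ) :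
    ∑ y : Fin r → ZMod p, f (diffs r p y) = ∑ h, (p : ℤ) * f h := by
  rw [Fintype.sum_equiv (diffEquiv r p hr) (fun y => f (diffs r p y)) (fun q => f q.2)
    (fun _ => rfl), Fintype.sum_prod_type]
  simp [ZMod.card, Finset.mul_sum]

lemma card_le_ker (r p : ℕ) [NeZero p] (G : Setoid (Fin r)) :
    (∑ y : Fin r → ZMod p, if G ≤ Setoid.ker y then (1 : ℤ) else 0) =
      (p : ℤ) ^ Nat.card (Quotient G) := by
  have h := Nat.card_congr (Setoid.liftEquiv (β := ZMod p) G)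
  rw [Nat.card_fun, Nat.card_zmod, Nat.card_eq_fintype_card, Fintype.card_subtype,
    Finset.card_filter] at h
  exact_mod_cast h

/-- Möbius inversion: summing `λ` over the partitions finer than `K` recovers `2 ^ (r - |K|)`. -/
lemma sum_lamG_le (r : ℕ) [Fintype (Setoid (Fin r))]
    (mu : Setoid (Fin r) → Setoid (Fin r) → ℤ)
    (hmu : ∀ F G : Setoid (Fin r), F ≤ G →
      (∑ᶠ (c : Setoid (Fin r)) (_ : F ≤ c ∧ c ≤ G), mu F c) = if F = G then 1 else 0)
    (K : Setoid (Fin r)) :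
    (∑ G : Setoid (Fin r), if G ≤ K then lamG r mu G else 0) =
      2 ^ (r - Nat.card (Quotient K)) := by
  have h1 : ∀ F : Setoid (Fin r),
      (∑ c : Setoid (Fin r), if F ≤ c ∧ c ≤ K then mu F c else 0) = if F = K then 1 else 0 := by
    intro F
    by_cases hF : F ≤ K
    · rw [← hmu F K hF, finsum_eq_sum_of_fintype]
      simp only [finsum_eq_if]
    · rw [if_neg (fun h => hF h.le)]
      exact Finset.sum_eq_zero fun c _ => if_neg fun h => hF (h.1.trans h.2)
  have h2 : ∀ G : Setoid (Fin r), (if G ≤ K then lamG r mu G else 0) =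
      ∑ F : Setoid (Fin r), (if F ≤ G ∧ G ≤ K then mu F G else 0) *
        2 ^ (r - Nat.card (Quotient F)) := by
    intro G
    unfold lamG
    rw [finsum_eq_sum_of_fintype]
    simp only [finsum_eq_if]
    by_cases hG : G ≤ K <;> simp [hG]
  rw [Finset.sum_congr rfl (fun G _ => h2 G), Finset.sum_comm]
  simp only [← Finset.sum_mul, h1]
  simp

/-- Kurlberg–Rudnick, Lemma 1 (`sum a(h,p)Delta(h,p)`):
`∑_{h mod p} a(h,p) Δ(h,p) = (p+1)^r - ∑_G λ(G) p^{|G|}`, the last sum over all set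
partitions `G` of `{1,…,r}` (equivalence relations on `Fin r`, with Möbius function `mu`
of the refinement order characterized by `∑_{F ≤ c ≤ G} μ(F,c) = δ_{F,G}`);
here `p^{r - codim H_G} ⋅ p = p^{|G|} ⋅ ... ` is recorded via `p^{|G|}` since
`codim H_G = r - |G|` and `p ⋅ p^{r-1-codim H_G} = p^{|G|}`. -/
theorem statement7 (r : ℕ) (hr : 2 ≤ r) (p : ℕ) (hp : p.Prime) (hodd : Odd p)
    (mu : Setoid (Fin r) → Setoid (Fin r) → ℤ)
    (hmu : ∀ F G : Setoid (Fin r), F ≤ G →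
      (∑ᶠ (c : Setoid (Fin r)) (_ : F ≤ c ∧ c ≤ G), mu F c) = if F = G then 1 else 0) :
    ∑ᶠ h : Fin (r - 1) → ZMod p, aP r p h * deltaP r p h =
      ((p : ℤ) + 1) ^ r - ∑ᶠ G : Setoid (Fin r), lamG r mu G * (p : ℤ) ^ Nat.card (Quotient G) := by
  have : Fact p.Prime := ⟨hp⟩
  have hr0 : 0 < r := by omega
  have : Finite (Setoid (Fin r)) :=
    Finite.of_injective (fun s : Setoid (Fin r) => s.r) fun s t h =>
      Setoid.ext fun a b => iff_of_eq (congrFun (congrFun h a) b)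
  let : Fintype (Setoid (Fin r)) := Fintype.ofFinite _
  rw [finsum_eq_sum_of_fintype, finsum_eq_sum_of_fintype]
  have hterm : ∀ h : Fin (r - 1) → ZMod p, aP r p h * deltaP r p h =
      2 ^ r * (NrP r p h : ℤ) - p * 2 ^ (r - reff r p h) := by
    intro h
    unfold aP deltaP
    rw [← pow_mul_pow_sub (2 : ℤ) (reff_le r p h)]
    ring
  have hfirst : (2 : ℤ) ^ r * ∑ h : Fin (r - 1) → ZMod p, (NrP r p h : ℤ) = (p + 1) ^ r := by
    rw [← Nat.cast_sum, sum_NrP, Nat.cast_pow, ← mul_pow, two_mul_card_squares p hodd]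
  have hsecond : ∑ h : Fin (r - 1) → ZMod p, (p : ℤ) * 2 ^ (r - reff r p h) =
      ∑ G : Setoid (Fin r), lamG r mu G * (p : ℤ) ^ Nat.card (Quotient G) := by
    rw [← sum_diffs r p hr0 (fun h => 2 ^ (r - reff r p h))]
    simp only [reff_diffs r p hr0, ← card_le_ker, ← sum_lamG_le r mu hmu]
    rw [Finset.sum_comm]
    simp only [Finset.mul_sum, mul_ite, mul_one, mul_zero]
  rw [Finset.sum_congr rfl (fun h _ => hterm h), Finset.sum_sub_distrib, ← Finset.mul_sum,
    hfirst, hsecond]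
end

section
/- Let r ≥ 2, let d be a squarefree positive integer, let 𝒢 = (G^{(p)})_{p ∣ d} be a tuple of set partitions of {1,…,r} indexed by the primes dividing d, and let C ⊂ ℝ^{r−1} be a bounded convex set. If supp(𝒢) > diam_1(C)^{r(r−1)/2}, then every h ∈ C ∩ L(𝒢) satisfies σ_{ij}(h) = 0 for some 1 ≤ i < j ≤ r, i.e. C ∩ L(𝒢) is contained in the walls. -/
/-!
If `h ∈ C ∩ L(𝒢)` lay on no wall, then `N = ∏_{a < b} σ_{ab}(h)` would be a nonzero integer.
Every prime `p ∣ d` with `G^{(p)}` nontrivial divides some factor `σ_{ab}(h) = b_b(h) - b_a(h)`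
(`exists_dvd_sigmaSum`), so, these primes being distinct, `supp(𝒢) ∣ N` (`suppT_dvd_sigmaProd`)
and `supp(𝒢) ≤ |N|`. On the other hand each factor satisfies `|σ_{ab}(h)| ≤ diam_1(C)`
(`abs_sigmaSum_le_diam1`), so `|N| ≤ diam_1(C)^{r(r-1)/2}`, contradicting the hypothesis.
-/

open scoped Classical

/-- `h ∈ L(𝒢)`: for every prime `p ∣ d`, the reduction of `h` mod `p` lies in
`H_{G^{(p)}}`, i.e. `b_i(h) ≡ b_j(h) (mod p)` whenever `G^{(p)}` relates `i` and `j`. -/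
def memL (r d : ℕ) (𝒢 : {p // p ∈ d.primeFactors} → Setoid (Fin r))
    (h : Fin (r - 1) → ℤ) : Prop :=
  ∀ p : {p // p ∈ d.primeFactors}, ∀ i j : Fin r, (𝒢 p) i j →
    bsum r p.1 (fun k => (h k : ZMod p.1)) i = bsum r p.1 (fun k => (h k : ZMod p.1)) j

/-- `supp(𝒢)`: the product of the primes `p ∣ d` for which `G^{(p)}` is not the partition
into singletons (the bottom equivalence relation, equality). -/
noncomputable def suppT (r d : ℕ) (𝒢 : {p // p ∈ d.primeFactors} → Setoid (Fin r)) : ℕ :=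
  ∏ p ∈ d.primeFactors.attach, if 𝒢 p = ⊥ then 1 else p.1

/-- `diam_1(C) = sup { |x_1| + ⋯ + |x_{r-1}| : x ∈ C }`. -/
noncomputable def diam1 {m : ℕ} (C : Set (Fin m → ℝ)) : ℝ :=
  sSup ((fun x => ∑ i, |x i|) '' C)

/-- The linear form `σ_{ab}(h) = ∑_{a ≤ k < b} h_k`, with 0-indexed coordinates. -/
def sigmaSum {m : ℕ} (h : Fin m → ℤ) (a b : ℕ) : ℤ :=
  ∑ k ∈ Finset.univ.filter (fun k : Fin m => a ≤ (k : ℕ) ∧ (k : ℕ) < b), h k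

/-- The product of `σ_{ab}(h)` over all pairs `a < b < r`. -/
def sigmaProd {m : ℕ} (r : ℕ) (h : Fin m → ℤ) : ℤ :=
  ∏ b ∈ Finset.range r, ∏ a ∈ Finset.range b, sigmaSum h a b

lemma bsum_add_sigmaSum (r p : ℕ) (h : Fin (r - 1) → ℤ) {i j : Fin r} (hij : i < j) :
    bsum r p (fun k => (h k : ZMod p)) i + (sigmaSum h i j : ZMod p)
      = bsum r p (fun k => (h k : ZMod p)) j := by
  have hij' : (i : ℕ) < j := hij
  unfold bsum sigmaSum
  push_cast
  rw [← Finset.sum_union]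
  · congr 1
    ext k
    simp only [Finset.mem_union, Finset.mem_filter, Finset.mem_univ, true_and]
    omega
  · rw [Finset.disjoint_left]
    intro k
    simp only [Finset.mem_filter, Finset.mem_univ, true_and]
    omega

lemma exists_dvd_sigmaSum {r d : ℕ} {𝒢 : {p // p ∈ d.primeFactors} → Setoid (Fin r)}
    {h : Fin (r - 1) → ℤ} (hL : memL r d 𝒢 h) (p : {p // p ∈ d.primeFactors})
    (hp : 𝒢 p ≠ ⊥) :
    ∃ i j : Fin r, i < j ∧ ((p.1 : ℕ) : ℤ) ∣ sigmaSum h i j := by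
  obtain ⟨i, j, hne, hG⟩ : ∃ i j : Fin r, i ≠ j ∧ (𝒢 p) i j := by
    by_contra! hcon
    exact hp (Setoid.ext fun x y =>
      ⟨fun hxy => by_contra fun hn => hcon x y hn hxy, fun hxy => hxy ▸ (𝒢 p).refl x⟩)
  wlog hij : i < j generalizing i j
  · exact this j i hne.symm ((𝒢 p).symm hG) (lt_of_le_of_ne (not_lt.mp hij) hne.symm)
  refine ⟨i, j, hij, (ZMod.intCast_zmod_eq_zero_iff_dvd _ _).mp ?_⟩
  simpa [hL p i j hG] using bsum_add_sigmaSum r p.1 h hij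

lemma suppT_dvd_sigmaProd {r d : ℕ} {𝒢 : {p // p ∈ d.primeFactors} → Setoid (Fin r)}
    {h : Fin (r - 1) → ℤ} (hL : memL r d 𝒢 h) :
    (suppT r d 𝒢 : ℤ) ∣ sigmaProd r h := by
  unfold suppT
  rw [Nat.cast_prod]
  apply Finset.prod_dvd_of_coprime
  · intro p _ q _ hpq
    have hcop : Nat.Coprime p.1 q.1 :=
      (Nat.coprime_primes (Nat.prime_of_mem_primeFactors p.2)
        (Nat.prime_of_mem_primeFactors q.2)).mpr fun e => hpq (Subtype.ext e)
    refine Nat.isCoprime_iff_coprime.mpr ?_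
    split_ifs
    exacts [Nat.coprime_one_left _, Nat.coprime_one_left _, Nat.coprime_one_right _, hcop]
  · intro p _
    split_ifs with hp
    · simp
    · obtain ⟨i, j, hij, hdvd⟩ := exists_dvd_sigmaSum hL p hp
      exact (hdvd.trans (Finset.dvd_prod_of_mem (fun a => sigmaSum h a j)
        (Finset.mem_range.mpr hij))).trans
        (Finset.dvd_prod_of_mem (fun b => ∏ a ∈ Finset.range b, sigmaSum h a b)
          (Finset.mem_range.mpr j.2))

lemma abs_sigmaSum_le_diam1 {m : ℕ} {C : Set (Fin m → ℝ)} (hbd : Bornology.IsBounded C)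
    {h : Fin m → ℤ} (hC : (fun i => (h i : ℝ)) ∈ C) (a b : ℕ) :
    |(sigmaSum h a b : ℝ)| ≤ diam1 C := by
  -- Boundedness of `C` is what makes the supremum in `diam1` a genuine upper bound.
  have hbdd : BddAbove ((fun x : Fin m → ℝ => ∑ i, |x i|) '' C) :=
    (hbd.isCompact_closure.image (by fun_prop)).bddAbove.mono (Set.image_mono subset_closure)
  calc |(sigmaSum h a b : ℝ)|
      ≤ ∑ k ∈ Finset.univ.filter (fun k : Fin m => a ≤ (k : ℕ) ∧ (k : ℕ) < b), |(h k : ℝ)| := by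
        unfold sigmaSum
        push_cast
        exact Finset.abs_sum_le_sum_abs _ _
    _ ≤ ∑ k, |(h k : ℝ)| :=
        Finset.sum_le_sum_of_subset_of_nonneg (Finset.filter_subset _ _)
          fun _ _ _ => abs_nonneg _
    _ ≤ diam1 C := le_csSup hbdd ⟨_, hC, rfl⟩

lemma abs_sigmaProd_le {m : ℕ} (r : ℕ) {C : Set (Fin m → ℝ)} (hbd : Bornology.IsBounded C)
    {h : Fin m → ℤ} (hC : (fun i => (h i : ℝ)) ∈ C) :
    |(sigmaProd r h : ℝ)| ≤ diam1 C ^ (r * (r - 1) / 2) := by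
  unfold sigmaProd
  push_cast
  rw [Finset.abs_prod, ← Finset.sum_range_id, ← Finset.prod_pow_eq_pow_sum]
  refine Finset.prod_le_prod (fun _ _ => abs_nonneg _) fun b _ => ?_
  rw [Finset.abs_prod]
  calc ∏ a ∈ Finset.range b, |(sigmaSum h a b : ℝ)|
      ≤ ∏ _a ∈ Finset.range b, diam1 C :=
        Finset.prod_le_prod (fun _ _ => abs_nonneg _) fun a _ => abs_sigmaSum_le_diam1 hbd hC a b
    _ = diam1 C ^ b := by simp

/-- Kurlberg–Rudnick, Lemma 2 (`avoid walls`): if `supp(𝒢) > diam_1(C)^{r(r-1)/2}` then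
`C ∩ L(𝒢)` is contained in the walls `{σ_{ij} = 0}`. -/
theorem statement9 (r : ℕ) (hr : 2 ≤ r) (d : ℕ) (hd : Squarefree d)
    (𝒢 : {p // p ∈ d.primeFactors} → Setoid (Fin r))
    (C : Set (Fin (r - 1) → ℝ)) (hbd : Bornology.IsBounded C) (hconv : Convex ℝ C)
    (hsupp : diam1 C ^ (r * (r - 1) / 2) < (suppT r d 𝒢 : ℝ)) :
    ∀ h : Fin (r - 1) → ℤ, (fun i => (h i : ℝ)) ∈ C → memL r d 𝒢 h →
      ∃ a b : ℕ, a < b ∧ b ≤ r - 1 ∧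
        (∑ k ∈ Finset.univ.filter (fun k : Fin (r - 1) => a ≤ (k : ℕ) ∧ (k : ℕ) < b), h k) = 0 := by
  intro h hC hL
  by_contra! hcon
  have hne : sigmaProd r h ≠ 0 :=
    Finset.prod_ne_zero_iff.mpr fun b hb => Finset.prod_ne_zero_iff.mpr fun a ha =>
      hcon a b (Finset.mem_range.mp ha) (Nat.le_sub_one_of_lt (Finset.mem_range.mp hb))
  have hle : (suppT r d 𝒢 : ℤ) ≤ |sigmaProd r h| :=
    Int.le_of_dvd (abs_pos.mpr hne) ((dvd_abs _ _).mpr (suppT_dvd_sigmaProd hL))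
  have hle' : (suppT r d 𝒢 : ℝ) ≤ |(sigmaProd r h : ℝ)| := by exact_mod_cast hle
  exact absurd hsupp (not_lt.mpr (hle'.trans (abs_sigmaProd_le r hbd hC)))
end

section
/- Fix α > 0. For every ε > 0 there exists a constant C > 0 such that for every squarefree positive integer q, the number of divisors d of q with d < s^α is at most C · s^ε. -/
/-!
The count is bounded by Rankin's trick: for any `t > 0`, each divisor `d < s ^ α` has
`(s ^ α / d) ^ t ≥ 1`, so the number of them is at most
`s ^ (α * t) * ∑ d ∣ q, d ^ (-t) = s ^ (α * t) * ∏ p ∣ q, (1 + p ^ (-t))`, as `q` is squarefree.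
With `t = ε / (2 * α)` the first factor is `s ^ (ε / 2)`. For the second, `s` is the product of the
numbers `2 / (1 + 1 / p) ≥ 4 / 3`, while `1 + p ^ (-t) → 1`; hence
`1 + p ^ (-t) ≤ (2 / (1 + 1 / p)) ^ (ε / 2)` for all `p` beyond some `M`, and the fewer than `M`
remaining primes cost at most a factor `2` each.
-/


/-- `s = 2^{ω(q)} / σ_{-1}(q)` where `σ_{-1}(q) = ∏_{p ∣ q} (1 + 1/p)`. -/
noncomputable def sMean (q : ℕ) : ℝ :=
  2 ^ q.primeFactors.card / ∏ p ∈ q.primeFactors, (1 + 1 / (p : ℝ))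

lemma sMean_eq_prod (q : ℕ) :
    sMean q = ∏ p ∈ q.primeFactors, (2 / (1 + 1 / (p : ℝ))) := by
  rw [sMean, Finset.prod_div_distrib, Finset.prod_const]

lemma four_thirds_le {p : ℕ} (hp : 2 ≤ p) : (4 / 3 : ℝ) ≤ 2 / (1 + 1 / (p : ℝ)) := by
  have hp' : (2 : ℝ) ≤ p := by exact_mod_cast hp
  have : 1 / (p : ℝ) ≤ 1 / 2 := one_div_le_one_div_of_le (by norm_num) hp'
  rw [le_div_iff₀ (by positivity)]
  linarith

lemma sMean_pos (q : ℕ) : 0 < sMean q := by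
  rw [sMean]
  exact div_pos (by positivity) (Finset.prod_pos fun p _ => by positivity)

lemma sum_divisors_rpow {q : ℕ} (hq : Squarefree q) (t : ℝ) :
    ∑ d ∈ q.divisors, (d : ℝ) ^ t = ∏ p ∈ q.primeFactors, (1 + (p : ℝ) ^ t) := by
  -- an arithmetic function has to vanish at `0`
  let f : ArithmeticFunction ℝ := ⟨fun n => if n = 0 then 0 else (n : ℝ) ^ t, if_pos rfl⟩
  have hf {n : ℕ} (hn : n ≠ 0) : f n = (n : ℝ) ^ t := if_neg hn
  have hmul : f.IsMultiplicative := by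
    refine ArithmeticFunction.IsMultiplicative.iff_ne_zero.2 ⟨?_, fun {m n} hm hn _ => ?_⟩
    · simp [hf one_ne_zero]
    · rw [hf hm, hf hn, hf (mul_ne_zero hm hn), Nat.cast_mul,
        Real.mul_rpow (Nat.cast_nonneg m) (Nat.cast_nonneg n)]
  rw [Finset.sum_congr rfl fun d hd => (hf (Nat.pos_of_mem_divisors hd).ne').symm,
    ← hmul.prodPrimeFactors_one_add_of_squarefree hq]
  exact Finset.prod_congr rfl fun p hp => by rw [hf (Nat.prime_of_mem_primeFactors hp).ne_zero]

/-- The Rankin factor `∏ (1 + p ^ (-t))` is smaller than any power of `s`, up to a constant. -/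
lemma prod_one_add_le {t δ : ℝ} (ht : 0 < t) (hδ : 0 < δ) :
    ∃ C > 0, ∀ q : ℕ, ∏ p ∈ q.primeFactors, (1 + (p : ℝ) ^ (-t)) ≤ C * sMean q ^ δ := by
  have hlim : Filter.Tendsto (fun p : ℕ => 1 + (p : ℝ) ^ (-t)) Filter.atTop (nhds 1) := by
    simpa using ((tendsto_rpow_neg_atTop ht).comp tendsto_natCast_atTop_atTop).const_add (1 : ℝ)
  obtain ⟨M, hM⟩ := Filter.eventually_atTop.1
    (hlim.eventually_le_const (Real.one_lt_rpow (by norm_num : (1 : ℝ) < 4 / 3) hδ))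
  refine ⟨2 ^ M, by positivity, fun q => ?_⟩
  have hfac : ∀ p ∈ q.primeFactors, 1 + (p : ℝ) ^ (-t) ≤
      (if p < M then 2 else 1) * (2 / (1 + 1 / (p : ℝ))) ^ δ := by
    intro p hp
    have hp2 := (Nat.prime_of_mem_primeFactors hp).two_le
    have h43 := four_thirds_le hp2
    split_ifs with h
    · have h1 : (p : ℝ) ^ (-t) ≤ 1 :=
        Real.rpow_le_one_of_one_le_of_nonpos (by exact_mod_cast (by omega : 1 ≤ p)) (by linarith)
      have h2 : 1 ≤ (2 / (1 + 1 / (p : ℝ))) ^ δ := Real.one_le_rpow (by linarith) hδ.le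
      linarith
    · rw [one_mul]
      exact (hM p (not_lt.1 h)).trans (Real.rpow_le_rpow (by norm_num) h43 hδ.le)
  calc ∏ p ∈ q.primeFactors, (1 + (p : ℝ) ^ (-t))
      ≤ ∏ p ∈ q.primeFactors, ((if p < M then 2 else 1) * (2 / (1 + 1 / (p : ℝ))) ^ δ) :=
        Finset.prod_le_prod (fun p _ => by positivity) hfac
    _ = 2 ^ (q.primeFactors.filter (· < M)).card * sMean q ^ δ := by
        rw [Finset.prod_mul_distrib, sMean_eq_prod,
          Real.finsetProd_rpow _ _ (fun p _ => by positivity), Finset.prod_ite]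
        simp
    _ ≤ 2 ^ M * sMean q ^ δ := by
        have hc : (q.primeFactors.filter (· < M)).card ≤ M := by
          simpa using Finset.card_le_card (t := Finset.range M) fun p hp =>
            Finset.mem_range.2 (Finset.mem_filter.1 hp).2
        have := (sMean_pos q).le
        gcongr
        norm_num

/-- Kurlberg–Rudnick, Lemma `small divisors` (Appendix C): for fixed `α > 0` and every
`ε > 0`, the number of divisors `d` of a squarefree `q` with `d < s^α` is `O(s^ε)`. -/
theorem statement13 (α : ℝ) (hα : 0 < α) (ε : ℝ) (hε : 0 < ε) :
    ∃ C > 0, ∀ q : ℕ, Squarefree q →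
      ((q.divisors.filter (fun d : ℕ => (d : ℝ) < sMean q ^ α)).card : ℝ) ≤ C * sMean q ^ ε := by
  set t := ε / (2 * α) with ht_def
  have ht : 0 < t := by positivity
  have hαt : α * t = ε / 2 := by rw [ht_def]; field_simp
  obtain ⟨C, hC, hbound⟩ := prod_one_add_le ht (half_pos hε)
  refine ⟨C, hC, fun q hq => ?_⟩
  have hs := sMean_pos q
  calc ((q.divisors.filter (fun d : ℕ => (d : ℝ) < sMean q ^ α)).card : ℝ)
      = ∑ d ∈ q.divisors.filter (fun d : ℕ => (d : ℝ) < sMean q ^ α), (1 : ℝ) := by simp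
    _ ≤ ∑ d ∈ q.divisors.filter (fun d : ℕ => (d : ℝ) < sMean q ^ α),
          sMean q ^ (ε / 2) * (d : ℝ) ^ (-t) := by
        refine Finset.sum_le_sum fun d hd => ?_
        obtain ⟨hd, hlt⟩ := Finset.mem_filter.1 hd
        have hd0 : (0 : ℝ) < d := by exact_mod_cast Nat.pos_of_mem_divisors hd
        rw [Real.rpow_neg hd0.le, ← div_eq_mul_inv, one_le_div (by positivity), ← hαt,
          Real.rpow_mul hs.le]
        exact Real.rpow_le_rpow hd0.le hlt.le ht.le
    _ ≤ ∑ d ∈ q.divisors, sMean q ^ (ε / 2) * (d : ℝ) ^ (-t) :=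
        Finset.sum_le_sum_of_subset_of_nonneg (Finset.filter_subset _ _)
          fun d _ _ => by positivity
    _ = sMean q ^ (ε / 2) * ∏ p ∈ q.primeFactors, (1 + (p : ℝ) ^ (-t)) := by
        rw [← Finset.mul_sum, sum_divisors_rpow hq]
    _ ≤ sMean q ^ (ε / 2) * (C * sMean q ^ (ε / 2)) := by
        gcongr
        exact hbound q
    _ = C * sMean q ^ ε := by
        rw [mul_left_comm, ← Real.rpow_add hs, add_halves]
end

section
/- Let S be a finite subset of ℝ/ℤ and let 0 < x < 1/2. Then g(x) = Σ_{k ≥ 2} (−1)^k N_k(x), the sum being finite since N_k(x) = 0 for k > #S. Moreover, for every integer n ≥ 1 one has Σ_{k=2}^{2n+1} (−1)^k N_k(x) ≤ g(x) ≤ Σ_{k=2}^{2n} (−1)^k N_k(x). -/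
/-!
Fix the first point `a` of a tuple. Since the total length of a chain is less than `x < 1/2`, signed
distances add up along it, so the tuple `(a, x_2, …, x_k)` is recorded faithfully by the increasing
sequence `((a - x_2)) < ⋯ < ((a - x_k))` in the finite set `offsets S x a` of those values
`((a - c))`, `c ∈ S`, which lie in `(0, x)`; every increasing sequence in this set occurs. With `m a`
the cardinality of that set, this gives `N_k(x) = ∑_{a ∈ S} (m a).choose (k - 1)` (`Nk_succ`).

On the other hand `a` is the first point of exactly one consecutive pair of diameter less than `x`
if `m a ≠ 0` (the nearest point behind it), and of none otherwise, so `g(x) = #{a ∈ S | m a ≠ 0}`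
(`gS_eq`). The two inequalities are then the Bonferroni inequalities for a single `a`, which follow
from `∑_{j ≤ M} (-1)^j (m + 1).choose j = (-1)^M m.choose M`. As `N_k(x) = 0` for `k > #S`, both
truncations equal the full sum for large `n`, which yields the identity for `g(x)`.
-/

/-- The signed distance `((t))`: the unique representative of `t ∈ ℝ/ℤ` in `[-1/2, 1/2)`. -/
noncomputable def sd (t : AddCircle (1 : ℝ)) : ℝ :=
  ((AddCircle.equivIco 1 (-(1 / 2)) t : Set.Ico (-(1 / 2) : ℝ) (-(1 / 2) + 1)) : ℝ)

/-- `N_k(x)`: the number of `k`-tuples `(x_1, …, x_k) ∈ S^k` with `((x_i - x_{i+1})) > 0`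
for all `i` and `∑_i ((x_i - x_{i+1})) < x`. -/
noncomputable def Nk (S : Finset (AddCircle (1 : ℝ))) (x : ℝ) (k : ℕ) : ℕ :=
  Nat.card {f : Fin k → AddCircle (1 : ℝ) //
    (∀ i, f i ∈ S) ∧
    (∀ i : Fin (k - 1),
      0 < sd (f ⟨i.1, by have := i.2; omega⟩ - f ⟨i.1 + 1, by have := i.2; omega⟩)) ∧
    (∑ i : Fin (k - 1),
      sd (f ⟨i.1, by have := i.2; omega⟩ - f ⟨i.1 + 1, by have := i.2; omega⟩)) < x}

/-- `g(x)`: the number of consecutive pairs of `S` of diameter less than `x`. -/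
noncomputable def gS (S : Finset (AddCircle (1 : ℝ))) (x : ℝ) : ℕ :=
  Nat.card {ab : AddCircle (1 : ℝ) × AddCircle (1 : ℝ) //
    ab.1 ∈ S ∧ ab.2 ∈ S ∧ 0 < sd (ab.1 - ab.2) ∧ sd (ab.1 - ab.2) < x ∧
    ¬∃ c ∈ S, 0 < sd (ab.1 - c) ∧ sd (ab.1 - c) < sd (ab.1 - ab.2)}

/-! ### Signed distance and offsets -/

lemma coe_sd (t : AddCircle (1 : ℝ)) : ((sd t : ℝ) : AddCircle (1 : ℝ)) = t :=
  AddCircle.coe_equivIco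

lemma sd_coe {t : ℝ} (h1 : -(1 / 2) ≤ t) (h2 : t < 1 / 2) : sd (t : AddCircle (1 : ℝ)) = t :=
  AddCircle.equivIco_coe_of_mem (p := (1 : ℝ)) (a := -(1 / 2)) ⟨h1, by linarith⟩

lemma sd_injective : Function.Injective sd := fun s t h => by
  rw [← coe_sd s, ← coe_sd t, h]

open Classical in
/-- The signed distances `((a - c))` from `a` to points `c ∈ S`, restricted to the interval
`(0, x)`. -/
noncomputable def offsets (S : Finset (AddCircle (1 : ℝ))) (x : ℝ) (a : AddCircle (1 : ℝ)) :
    Finset ℝ :=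
  (S.image fun c => sd (a - c)).filter fun t => 0 < t ∧ t < x

lemma mem_offsets {S : Finset (AddCircle (1 : ℝ))} {x : ℝ} {a : AddCircle (1 : ℝ)} {t : ℝ} :
    t ∈ offsets S x a ↔ (∃ c ∈ S, sd (a - c) = t) ∧ 0 < t ∧ t < x := by
  simp [offsets]

/-! ### Chains as increasing sequences of offsets -/

/-- The tuples counted by `Nk S x (j + 1)`. -/
def IsChainTuple (S : Finset (AddCircle (1 : ℝ))) (x : ℝ) (j : ℕ)
    (f : Fin (j + 1) → AddCircle (1 : ℝ)) : Prop :=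
  (∀ i, f i ∈ S) ∧ (∀ i : Fin j, 0 < sd (f i.castSucc - f i.succ)) ∧
    ∑ i : Fin j, sd (f i.castSucc - f i.succ) < x

/-- The tuple with first entry `a` whose later entries lie at the prescribed offsets behind `a`. -/
noncomputable def tupleOf (S : Finset (AddCircle (1 : ℝ))) (x : ℝ) (j : ℕ)
    (p : Σ a : S, Fin j ↪o offsets S x a) : Fin (j + 1) → AddCircle (1 : ℝ) :=
  Fin.cons p.1.1 fun i => p.1.1 - (((p.2 i : ℝ)) : AddCircle (1 : ℝ))

lemma tupleOf_injective (S : Finset (AddCircle (1 : ℝ))) {x : ℝ} (hx2 : x < 1 / 2) (j : ℕ) :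
    Function.Injective (tupleOf S x j) := by
  rintro ⟨⟨a, ha⟩, e⟩ ⟨⟨b, hb⟩, e'⟩ h
  obtain ⟨h1, h2⟩ := Fin.cons_injective2 h
  dsimp only at h1 h2
  subst h1
  congr 1
  ext i
  have h3 := sub_right_injective (congrFun h2 i)
  have k1 := (mem_offsets.1 (e i).2).2
  have k2 := (mem_offsets.1 (e' i).2).2
  have := congrArg sd h3
  rwa [sd_coe (by linarith) (by linarith), sd_coe (by linarith) (by linarith)] at this

lemma isChainTuple_tupleOf (S : Finset (AddCircle (1 : ℝ))) {x : ℝ} (hx : 0 < x) (hx2 : x < 1 / 2)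
    (j : ℕ) (p : Σ a : S, Fin j ↪o offsets S x a) : IsChainTuple S x j (tupleOf S x j p) := by
  obtain ⟨⟨a, ha⟩, e⟩ := p
  -- All entries, the first one included, have the form `a - T i` with `T` increasing from `0`.
  let T : Fin (j + 1) → ℝ := Fin.cons 0 fun i => (e i : ℝ)
  have hT : ∀ i, tupleOf S x j ⟨⟨a, ha⟩, e⟩ i = a - ((T i : ℝ) : AddCircle (1 : ℝ)) := by
    intro i
    refine Fin.cases ?_ (fun i => ?_) i <;> simp [tupleOf, T]
  have hTx : ∀ i, 0 ≤ T i ∧ T i < x := by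
    intro i
    refine Fin.cases ?_ (fun i => ?_) i
    · simpa [T] using hx
    · have := (mem_offsets.1 (e i).2).2
      simpa [T] using ⟨this.1.le, this.2⟩
  have hmono : ∀ i : Fin j, T i.castSucc < T i.succ := by
    intro i
    rcases i with ⟨_ | i, hi⟩
    · exact (mem_offsets.1 (e ⟨0, hi⟩).2).2.1
    · exact e.strictMono (show (⟨i, by omega⟩ : Fin j) < ⟨i + 1, hi⟩ from Nat.lt_succ_self i)
  have hstep : ∀ i : Fin j, sd (tupleOf S x j ⟨⟨a, ha⟩, e⟩ i.castSucc -
      tupleOf S x j ⟨⟨a, ha⟩, e⟩ i.succ) = T i.succ - T i.castSucc := by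
    intro i
    rw [hT, hT, sub_sub_sub_cancel_left, ← AddCircle.coe_sub]
    have h1 := hmono i
    have h2 := hTx i.succ
    have h3 := hTx i.castSucc
    exact sd_coe (by linarith) (by linarith)
  refine ⟨fun i => ?_, fun i => ?_, ?_⟩
  · refine Fin.cases ?_ (fun i => ?_) i
    · exact ha
    · obtain ⟨c, hc, h⟩ := (mem_offsets.1 (e i).2).1
      simpa [tupleOf, ← h, coe_sd] using hc
  · rw [hstep]
    exact sub_pos.2 (hmono i)
  · simp_rw [hstep]
    rw [Finset.sum_sub_distrib]
    have h1 := Fin.sum_univ_succ T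
    have h2 := Fin.sum_univ_castSucc T
    have h3 : T 0 = 0 := rfl
    have h4 := hTx (Fin.last j)
    linarith

/-- Signed distances add up along a chain of total length less than `x < 1/2`, so the distances
from its first point to the later ones are strictly increasing offsets. -/
lemma exists_tupleOf_eq (S : Finset (AddCircle (1 : ℝ))) {x : ℝ} (hx2 : x < 1 / 2)
    (j : ℕ) {f : Fin (j + 1) → AddCircle (1 : ℝ)} (hf : IsChainTuple S x j f) :
    ∃ p, tupleOf S x j p = f := by
  obtain ⟨hS, hpos, hsum⟩ := hf
  let d : ℕ → ℝ := fun l =>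
    if h : l < j then sd (f (Fin.castSucc ⟨l, h⟩) - f (Fin.succ ⟨l, h⟩)) else 0
  let P : ℕ → ℝ := fun l => ∑ i ∈ Finset.range l, d i
  have hd : ∀ l, 0 ≤ d l := by
    intro l
    by_cases h : l < j
    · simpa [d, h] using (hpos ⟨l, h⟩).le
    · simp [d, h]
  have hPs : ∀ l, P (l + 1) = P l + d l := fun l => Finset.sum_range_succ _ _
  have hmono : Monotone P := monotone_nat_of_le_succ fun l => by
    rw [hPs]; linarith [hd l]
  have hP0 : P 0 = 0 := Finset.sum_range_zero _
  have hPj : P j < x := by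
    have : P j = ∑ i : Fin j, sd (f i.castSucc - f i.succ) := by
      simp only [P]
      rw [Finset.sum_range]
      exact Finset.sum_congr rfl fun i _ => dif_pos i.2
    rwa [this]
  have hPlt : ∀ l, l ≤ j → 0 ≤ P l ∧ P l < x := fun l hl =>
    ⟨hP0 ▸ hmono (Nat.zero_le l), (hmono hl).trans_lt hPj⟩
  have hcoe : ∀ l (hl : l < j + 1), ((P l : ℝ) : AddCircle (1 : ℝ)) = f 0 - f ⟨l, hl⟩ := by
    intro l
    induction l with
    | zero => intro hl; simp [hP0]
    | succ l ih =>
      intro hl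
      have hl' : l < j := by omega
      have h1 : d l = sd (f ⟨l, by omega⟩ - f ⟨l + 1, hl⟩) := by
        simp [d, hl']
      rw [hPs, AddCircle.coe_add, ih (by omega), h1, coe_sd]
      abel
  have hPsd : ∀ i : Fin j, sd (f 0 - f i.succ) = P (i + 1) := by
    intro i
    have h := hPlt (i + 1) i.2
    have h2 : ((P (i + 1) : ℝ) : AddCircle (1 : ℝ)) = f 0 - f i.succ := hcoe _ _
    rw [← h2]
    exact sd_coe (by linarith) (by linarith)
  have hPpos : ∀ l, l < j → P l < P (l + 1) := by
    intro l hl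
    have h1 : 0 < d l := by simpa [d, hl] using hpos ⟨l, hl⟩
    rw [hPs]; linarith
  have hmem : ∀ i : Fin j, P (i + 1) ∈ offsets S x (f 0) := fun i =>
    mem_offsets.2 ⟨⟨f i.succ, hS _, hPsd i⟩,
      (hPlt i i.2.le).1.trans_lt (hPpos i i.2), (hPlt _ i.2).2⟩
  have hsm : StrictMono fun i : Fin j => (⟨P (i + 1), hmem i⟩ : offsets S x (f 0)) := by
    intro i k hik
    have h1 : (i : ℕ) + 1 ≤ k := hik
    exact (hmono h1).trans_lt (hPpos k k.2)
  refine ⟨⟨⟨f 0, hS 0⟩, OrderEmbedding.ofStrictMono _ hsm⟩, ?_⟩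
  funext i
  refine Fin.cases rfl (fun i => ?_) i
  have h2 : ((P (i + 1) : ℝ) : AddCircle (1 : ℝ)) = f 0 - f i.succ := hcoe _ _
  simp [tupleOf, h2]

/-! ### Counting chains and consecutive pairs -/

/-- Grouping tuples by their first point turns `N_{j+1}(x)` into a sum of binomial coefficients. -/
lemma Nk_succ (S : Finset (AddCircle (1 : ℝ))) {x : ℝ} (hx : 0 < x) (hx2 : x < 1 / 2) (j : ℕ) :
    Nk S x (j + 1) = ∑ a ∈ S, (offsets S x a).card.choose j := by
  have e : (Σ a : S, Fin j ↪o offsets S x a) ≃ {f // IsChainTuple S x j f} :=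
    Equiv.ofBijective (fun p => ⟨tupleOf S x j p, isChainTuple_tupleOf S hx hx2 j p⟩)
      ⟨fun p q h => tupleOf_injective S hx2 j (congrArg Subtype.val h), fun ⟨f, hf⟩ => by
        obtain ⟨p, hp⟩ := exists_tupleOf_eq S hx2 j hf
        exact ⟨p, Subtype.ext hp⟩⟩
  have hfin : ∀ a : S, Finite (Fin j ↪o offsets S x a) := fun a =>
    Finite.of_injective (fun g => (g : Fin j → offsets S x a)) DFunLike.coe_injective
  calc Nk S x (j + 1) = Nat.card {f // IsChainTuple S x j f} := rfl
    _ = Nat.card (Σ a : S, Fin j ↪o offsets S x a) := (Nat.card_congr e).symm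
    _ = ∑ a : S, (offsets S x a).card.choose j := by
      rw [Nat.card_sigma]
      refine Finset.sum_congr rfl fun a _ => ?_
      rw [Nat.card_congr Set.powersetCard.ofFinEmbEquiv, Set.powersetCard.card]
      simp
    _ = _ := Finset.sum_coe_sort S fun a => (offsets S x a).card.choose j

/-- A point `a` starts exactly one consecutive pair of diameter less than `x`, realizing the
smallest offset of `a`, unless it has no offset at all. -/
lemma gS_eq (S : Finset (AddCircle (1 : ℝ))) (x : ℝ) :
    gS S x = ∑ a ∈ S, if (offsets S x a).card = 0 then 0 else 1 := by
  classical
  have key : gS S x = Nat.card {a // a ∈ S.filter fun a => (offsets S x a).card ≠ 0} := by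
    refine Nat.card_congr (Equiv.ofBijective (fun p => ⟨p.1.1, ?_⟩) ⟨?_, ?_⟩)
    · obtain ⟨⟨a, b⟩, ha, hb, h0, h1, -⟩ := p
      refine Finset.mem_filter.2 ⟨ha, Finset.card_ne_zero.2 ⟨sd (a - b), ?_⟩⟩
      exact mem_offsets.2 ⟨⟨b, hb, rfl⟩, h0, h1⟩
    · rintro ⟨⟨a, b⟩, ha, hb, h0, h1, h2⟩ ⟨⟨a', b'⟩, ha', hb', h0', h1', h2'⟩ h
      obtain rfl : a = a' := congrArg Subtype.val h
      dsimp only at *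
      push Not at h2 h2'
      have h3 : sd (a - b) = sd (a - b') := le_antisymm (h2 b' hb' h0') (h2' b hb h0)
      obtain rfl : b = b' := sub_right_injective (sd_injective h3)
      rfl
    · rintro ⟨a, h⟩
      obtain ⟨ha, hne⟩ := Finset.mem_filter.1 h
      obtain ⟨t, ht, hmin⟩ := Finset.exists_min_image _ id (Finset.card_ne_zero.1 hne)
      obtain ⟨⟨b, hb, rfl⟩, h0, h1⟩ := mem_offsets.1 ht
      refine ⟨⟨(a, b), ha, hb, h0, h1, ?_⟩, rfl⟩
      rintro ⟨c, hc, hc0, hc1⟩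
      exact absurd (hmin _ (mem_offsets.2 ⟨⟨c, hc, rfl⟩, hc0, hc1.trans h1⟩)) (not_le.2 hc1)
  rw [key, Nat.card_eq_fintype_card, Fintype.card_coe, Finset.card_filter]
  exact Finset.sum_congr rfl fun a _ => by split_ifs <;> simp_all

/-- The offset `0` of `a` itself is excluded, which makes the inequality strict. -/
lemma card_offsets_lt {S : Finset (AddCircle (1 : ℝ))} (x : ℝ) {a : AddCircle (1 : ℝ)}
    (ha : a ∈ S) : (offsets S x a).card < S.card := by
  classical
  have hsub : offsets S x a ⊆ (S.erase a).image fun c => sd (a - c) := by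
    intro t ht
    obtain ⟨⟨c, hc, rfl⟩, h0, -⟩ := mem_offsets.1 ht
    refine Finset.mem_image.2 ⟨c, Finset.mem_erase.2 ⟨?_, hc⟩, rfl⟩
    rintro rfl
    have : sd (c - c) = 0 := by
      rw [sub_self, ← AddCircle.coe_zero]
      exact sd_coe (by norm_num) (by norm_num)
    linarith
  exact ((Finset.card_le_card hsub).trans Finset.card_image_le).trans_lt
    (Finset.card_erase_lt_of_mem ha)

/-! ### Bonferroni inequalities -/

lemma sum_Icc_choose (m M : ℕ) :
    ∑ k ∈ Finset.Icc 2 (M + 1), (-1 : ℤ) ^ k * (m.choose (k - 1) : ℤ) =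
      1 - ∑ j ∈ Finset.range (M + 1), (-1 : ℤ) ^ j * (m.choose j : ℤ) := by
  induction M with
  | zero => simp
  | succ M ih =>
    rw [Finset.sum_Icc_succ_top (by omega), ih, Finset.sum_range_succ _ (M + 1)]
    simp only [Nat.add_sub_cancel]
    ring

/-- Both Bonferroni inequalities at once: the error of the truncated sum at `K = M + 1` has the
sign of `(-1)^K`. -/
lemma bonferroni (m M : ℕ) :
    0 ≤ (-1 : ℤ) ^ (M + 1) * (∑ k ∈ Finset.Icc 2 (M + 1), (-1 : ℤ) ^ k * (m.choose (k - 1) : ℤ) -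
      if m = 0 then 0 else 1) := by
  rw [sum_Icc_choose]
  rcases m with _ | m
  · rw [Finset.sum_range_succ']
    simp
  · rw [Int.alternating_sum_range_choose_eq_choose]
    have h : (-1 : ℤ) ^ (M + 1) * (-1) ^ M = -1 := by
      rw [pow_succ, mul_right_comm, ← mul_pow]; simp
    have : (-1 : ℤ) ^ (M + 1) * (1 - (-1) ^ M * (m.choose M : ℤ) - 1) = (m.choose M : ℤ) := by
      linear_combination (-(m.choose M : ℤ)) * h
    simp only [Nat.add_eq_zero_iff, one_ne_zero, and_false, if_false]
    rw [this]
    positivity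

lemma bonferroni_gS (S : Finset (AddCircle (1 : ℝ))) {x : ℝ} (hx : 0 < x) (hx2 : x < 1 / 2)
    (M : ℕ) : 0 ≤ (-1 : ℤ) ^ (M + 1) *
      (∑ k ∈ Finset.Icc 2 (M + 1), (-1 : ℤ) ^ k * (Nk S x k : ℤ) - (gS S x : ℤ)) := by
  have h1 : ∑ k ∈ Finset.Icc 2 (M + 1), (-1 : ℤ) ^ k * (Nk S x k : ℤ) =
      ∑ a ∈ S, ∑ k ∈ Finset.Icc 2 (M + 1),
        (-1 : ℤ) ^ k * ((offsets S x a).card.choose (k - 1) : ℤ) := by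
    rw [Finset.sum_comm]
    refine Finset.sum_congr rfl fun k hk => ?_
    obtain ⟨j, rfl⟩ : ∃ j, k = j + 1 := ⟨k - 1, by have := (Finset.mem_Icc.1 hk).1; omega⟩
    rw [Nk_succ S hx hx2, Nat.cast_sum, Finset.mul_sum]
    simp
  rw [h1, gS_eq, Nat.cast_sum, ← Finset.sum_sub_distrib, Finset.mul_sum]
  refine Finset.sum_nonneg fun a _ => ?_
  simpa using bonferroni (offsets S x a).card M

/-- Kurlberg–Rudnick, Lemma `l:sandwich` (Appendix A): `g(x) = ∑_{k ≥ 2} (-1)^k N_k(x)`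
(a finite sum since `N_k(x) = 0` for `k > #S`), and for every `n ≥ 1`,
`∑_{k=2}^{2n+1} (-1)^k N_k(x) ≤ g(x) ≤ ∑_{k=2}^{2n} (-1)^k N_k(x)`. -/
theorem statement15 (S : Finset (AddCircle (1 : ℝ))) (x : ℝ) (hx : 0 < x)
    (hx2 : x < 1 / 2) :
    (∀ k : ℕ, S.card < k → Nk S x k = 0) ∧
    (gS S x : ℤ) = (∑ᶠ (k : ℕ) (_ : 2 ≤ k), (-1 : ℤ) ^ k * (Nk S x k : ℤ)) ∧
    ∀ n : ℕ, 1 ≤ n →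
      (∑ k ∈ Finset.Icc 2 (2 * n + 1), (-1 : ℤ) ^ k * (Nk S x k : ℤ)) ≤ (gS S x : ℤ) ∧
      (gS S x : ℤ) ≤ ∑ k ∈ Finset.Icc 2 (2 * n), (-1 : ℤ) ^ k * (Nk S x k : ℤ) := by
  have hzero : ∀ k : ℕ, S.card < k → Nk S x k = 0 := by
    intro k hk
    obtain ⟨j, rfl⟩ : ∃ j, k = j + 1 := ⟨k - 1, by omega⟩
    rw [Nk_succ S hx hx2]
    refine Finset.sum_eq_zero fun a ha => Nat.choose_eq_zero_of_lt ?_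
    have := card_offsets_lt x ha
    omega
  have hodd : ∀ n : ℕ, 1 ≤ n →
      (∑ k ∈ Finset.Icc 2 (2 * n + 1), (-1 : ℤ) ^ k * (Nk S x k : ℤ)) ≤ (gS S x : ℤ) := by
    intro n _
    have h := bonferroni_gS S hx hx2 (2 * n)
    rw [(odd_two_mul_add_one n).neg_one_pow] at h
    linarith
  have heven : ∀ n : ℕ, 1 ≤ n →
      (gS S x : ℤ) ≤ ∑ k ∈ Finset.Icc 2 (2 * n), (-1 : ℤ) ^ k * (Nk S x k : ℤ) := by
    intro n hn
    have h := bonferroni_gS S hx hx2 (2 * n - 1)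
    rw [Nat.sub_add_cancel (by omega), (even_two_mul n).neg_one_pow] at h
    linarith
  have hfin : ∀ M, S.card ≤ M → (∑ᶠ (k : ℕ) (_ : 2 ≤ k), (-1 : ℤ) ^ k * (Nk S x k : ℤ)) =
      ∑ k ∈ Finset.Icc 2 M, (-1 : ℤ) ^ k * (Nk S x k : ℤ) := by
    intro M hM
    refine finsum_cond_eq_sum_of_cond_iff _ fun {k} hk => ?_
    have : k ≤ S.card := by
      by_contra! h
      exact hk (by simp [hzero k h])
    rw [Finset.mem_Icc]
    omega
  refine ⟨hzero, le_antisymm ?_ ?_, fun n hn => ⟨hodd n hn, heven n hn⟩⟩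
  · rw [hfin (2 * (S.card + 1)) (by omega)]
    exact heven _ (by omega)
  · rw [hfin (2 * (S.card + 1) + 1) (by omega)]
    exact hodd _ (by omega)
end
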